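/- arXiv:0904.3379 — 14 statements merged into one kernel-verified Lean document; each statement's English description precedes it below -/
import Mathlib

section
/- Let n ≥ 1 and N > j ≥ 0 be integers. Then ∑_{i=0}^{N−j−1} (−1)^i · binom(N+i+j+n/2, N−j) · binom(n/2+2j+i, i) / [ (i+j+n/2+1/2) · (N−j−i−1)! · ∏_{k=0}^{i+1} (n/2+2j+k) ] = 2 · binom(N+1/2, N−j) / ( (2N+1)(2j+n/2) ) · Γ(n/2+j+1/2) / Γ(n/2+N+1/2). -/
open Finset

/-- Generalized binomial coefficient `binom(x, k) = x(x-1)⋯(x-k+1)/k!` for real `x`. -/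
noncomputable def rbinom (x : ℝ) (k : ℕ) : ℝ :=
  (∏ i ∈ Finset.range k, (x - i)) / (Nat.factorial k : ℝ)

/-- The generalized binomial coefficient written as a rising product. -/
theorem rbinom_add_natCast (x : ℝ) (k : ℕ) :
    rbinom (x + k) k = (∏ i ∈ Finset.range k, (x + 1 + i)) / (Nat.factorial k : ℝ) := by
  rw [rbinom, ← Finset.prod_range_reflect]
  congr 1
  refine Finset.prod_congr rfl fun i hi => ?_
  have hik : i + 1 ≤ k := Finset.mem_range.mp hi
  rw [Nat.sub_sub, Nat.cast_sub (by lia)]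
  push_cast
  ring

theorem Real.Gamma_add_natCast_eq_prod {x : ℝ} (hx : 0 < x) (k : ℕ) :
    Real.Gamma (x + k) = (∏ i ∈ Finset.range k, (x + i)) * Real.Gamma x := by
  induction k with
  | zero => simp
  | succ k ih =>
    rw [Nat.cast_succ, ← add_assoc, Real.Gamma_add_one (by positivity), ih,
      Finset.prod_range_succ]
    ring

/-- The iterated forward difference of `x ↦ x⁻¹`. -/
theorem fwdDiff_iter_inv (m : ℕ) {c : ℝ} (hc : 0 < c) :
    (fwdDiff (1 : ℝ))^[m] (fun x : ℝ => x⁻¹) c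
      = (-1) ^ m * (m.factorial : ℝ) / ∏ k ∈ Finset.range (m + 1), (c + k) := by
  induction m generalizing c with
  | zero => simp
  | succ m ih =>
    rw [Function.iterate_succ_apply', fwdDiff, ih hc, ih (by positivity)]
    have hQ : 0 < ∏ k ∈ Finset.range m, (c + 1 + k) :=
      Finset.prod_pos fun k _ => by positivity
    have hshift : ∀ l : ℕ, ∏ k ∈ Finset.range (l + 1), (c + k)
        = (∏ k ∈ Finset.range l, (c + 1 + k)) * c := by
      intro l
      rw [Finset.prod_range_succ']
      push_cast
      simp only [add_zero, add_assoc, add_comm (1 : ℝ)]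
    rw [hshift, hshift, Finset.prod_range_succ, Nat.factorial_succ]
    have hm : c + 1 + m ≠ 0 := by positivity
    push_cast
    field_simp
    ring

/-- Expansion of an iterated forward difference with the sign normalised at the base point. -/
theorem sum_alternating_choose_mul (f : ℝ → ℝ) (m : ℕ) (c : ℝ) :
    ∑ i ∈ Finset.range (m + 1), (-1 : ℝ) ^ i * (m.choose i : ℝ) * f (c + i)
      = (-1) ^ m * (fwdDiff (1 : ℝ))^[m] f c := by
  rw [fwdDiff_iter_eq_sum_shift, Finset.mul_sum]
  refine Finset.sum_congr rfl fun i hi => ?_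
  obtain ⟨d, rfl⟩ := Nat.exists_eq_add_of_le (Nat.lt_succ_iff.mp (Finset.mem_range.mp hi))
  have hd : ((-1 : ℝ) ^ d) * (-1) ^ d = 1 := by rw [← mul_pow]; simp
  simp only [Nat.add_sub_cancel_left, zsmul_eq_mul, nsmul_eq_mul, mul_one]
  push_cast
  rw [pow_add]
  linear_combination (-(-1 : ℝ) ^ i * ((i + d).choose i : ℝ) * f (c + i)) * hd

/-- Partial fractions: the alternating binomial sum of `P x / x` over `c, c + 1, …, c + m` only
sees the value of `P` at `0` when `P` has degree at most `m`. -/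
theorem sum_alternating_choose_mul_eval_div (P : Polynomial ℝ) {m : ℕ} (hP : P.natDegree ≤ m)
    {c : ℝ} (hc : 0 < c) :
    ∑ i ∈ Finset.range (m + 1), (-1 : ℝ) ^ i * (m.choose i : ℝ) * (P.eval (c + i) / (c + i))
      = P.eval 0 * (m.factorial : ℝ) / ∏ k ∈ Finset.range (m + 1), (c + k) := by
  have hdivX : (fwdDiff (1 : ℝ))^[m] P.divX.eval c = 0 := by
    rcases Nat.eq_zero_or_pos m with rfl | hm
    · rw [Polynomial.divX_eq_zero_iff.mpr
        (Polynomial.eq_C_of_natDegree_eq_zero (Nat.le_zero.mp hP))]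
      simp
    · rw [Polynomial.fwdDiff_iter_eq_zero_of_degree_lt
        (by rw [Polynomial.natDegree_divX_eq_natDegree_tsub_one]; lia)]
      rfl
  have hsplit : ∀ i : ℕ, P.eval (c + i) / (c + i)
      = P.divX.eval (c + i) + P.eval 0 * (c + i)⁻¹ := by
    intro i
    have hci : c + i ≠ 0 := by positivity
    have h := congrArg (Polynomial.eval (c + (i : ℝ))) P.divX_mul_X_add
    simp only [Polynomial.eval_add, Polynomial.eval_mul, Polynomial.eval_X,
      Polynomial.eval_C, Polynomial.coeff_zero_eq_eval_zero] at h
    rw [← h]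
    field_simp
  have hinv := sum_alternating_choose_mul (fun x : ℝ => x⁻¹) m c
  have hpoly := sum_alternating_choose_mul P.divX.eval m c
  rw [fwdDiff_iter_inv m hc] at hinv
  rw [hdivX, mul_zero] at hpoly
  have hsign : ((-1 : ℝ) ^ m) * (-1) ^ m = 1 := by rw [← mul_pow]; simp
  calc _ = ∑ i ∈ Finset.range (m + 1), (-1 : ℝ) ^ i * (m.choose i : ℝ) * P.divX.eval (c + i)
        + P.eval 0 * ∑ i ∈ Finset.range (m + 1),
          (-1 : ℝ) ^ i * (m.choose i : ℝ) * (c + i)⁻¹ := by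
        rw [Finset.mul_sum, ← Finset.sum_add_distrib]
        refine Finset.sum_congr rfl fun i _ => ?_
        rw [hsplit]
        ring
    _ = _ := by
        rw [hpoly, hinv]
        linear_combination
          (P.eval 0 * (m.factorial : ℝ) / ∏ k ∈ Finset.range (m + 1), (c + k)) * hsign

theorem sum_alternating_choose_mul_prod_div (m : ℕ) (b : ℝ) {c : ℝ} (hc : 0 < c) :
    ∑ i ∈ Finset.range (m + 1),
        (-1 : ℝ) ^ i * (m.choose i : ℝ) * ((∏ k ∈ Finset.range m, (b + i + k)) / (c + i))
      = (∏ k ∈ Finset.range m, (b - c + k)) * (m.factorial : ℝ)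
          / ∏ k ∈ Finset.range (m + 1), (c + k) := by
  have hdeg : (∏ k ∈ Finset.range m,
      (Polynomial.X + Polynomial.C (b - c + (k : ℝ)))).natDegree ≤ m := by
    refine (Polynomial.natDegree_prod_le _ _).trans ?_
    simp only [Polynomial.natDegree_X_add_C]
    simp
  have h := sum_alternating_choose_mul_eval_div _ hdeg hc
  simp only [Polynomial.eval_prod, Polynomial.eval_add, Polynomial.eval_X, Polynomial.eval_C,
    zero_add] at h
  rw [← h]
  refine Finset.sum_congr rfl fun i _ => ?_
  congr 2
  exact Finset.prod_congr rfl fun k _ => by ring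

theorem stmt0 (n N j : ℕ) (hn : 1 ≤ n) (hj : j < N) :
    ∑ i ∈ Finset.range (N - j),
        (-1 : ℝ) ^ i * rbinom ((N : ℝ) + i + j + n / 2) (N - j)
          * rbinom ((n : ℝ) / 2 + 2 * j + i) i /
        (((i : ℝ) + j + (n : ℝ) / 2 + 1 / 2) * ((N - j - i - 1).factorial : ℝ)
          * ∏ k ∈ Finset.range (i + 2), ((n : ℝ) / 2 + 2 * j + k))
      = 2 * rbinom ((N : ℝ) + 1 / 2) (N - j) / ((2 * (N : ℝ) + 1) * (2 * (j : ℝ) + n / 2))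
          * (Real.Gamma ((n : ℝ) / 2 + j + 1 / 2) / Real.Gamma ((n : ℝ) / 2 + N + 1 / 2)) := by
  obtain ⟨m, rfl⟩ := Nat.exists_eq_add_of_lt hj
  have hn0 : (0 : ℝ) < n := by exact_mod_cast hn
  rw [show j + m + 1 - j = m + 1 by lia]
  obtain ⟨a, ha⟩ : ∃ a : ℝ, a = (n : ℝ) / 2 + 2 * j := ⟨_, rfl⟩
  obtain ⟨c, hc⟩ : ∃ c : ℝ, c = (n : ℝ) / 2 + j + 1 / 2 := ⟨_, rfl⟩
  have ha0 : 0 < a := by rw [ha]; positivity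
  have hc0 : 0 < c := by rw [hc]; positivity
  have hm0 : (m.factorial : ℝ) ≠ 0 := by positivity
  have hterm : ∀ i ∈ Finset.range (m + 1),
      (-1 : ℝ) ^ i * rbinom (((j + m + 1 : ℕ) : ℝ) + i + j + n / 2) (m + 1)
          * rbinom ((n : ℝ) / 2 + 2 * j + i) i /
        (((i : ℝ) + j + (n : ℝ) / 2 + 1 / 2) * ((m + 1 - i - 1).factorial : ℝ)
          * ∏ k ∈ Finset.range (i + 2), ((n : ℝ) / 2 + 2 * j + k))
      = (1 / (a * ((m + 1).factorial : ℝ) * (m.factorial : ℝ))) *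
        ((-1 : ℝ) ^ i * (m.choose i : ℝ)
          * ((∏ k ∈ Finset.range m, (a + 2 + i + k)) / (c + i))) := by
    intro i hi
    have him : i ≤ m := Nat.lt_succ_iff.mp (Finset.mem_range.mp hi)
    rw [show ((j + m + 1 : ℕ) : ℝ) + i + j + n / 2 = (a + i) + ((m + 1 : ℕ) : ℝ) by
        rw [ha]; push_cast; ring,
      ← ha, rbinom_add_natCast, rbinom_add_natCast, Finset.prod_range_succ',
      show (i : ℝ) + j + (n : ℝ) / 2 + 1 / 2 = c + i by rw [hc]; ring,
      show m + 1 - i - 1 = m - i by lia, Finset.prod_range_succ', Finset.prod_range_succ,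
      Nat.cast_choose ℝ him,
      Finset.prod_congr rfl (fun k _ => show a + i + 1 + ((k + 1 : ℕ) : ℝ) = a + 2 + i + k by
        push_cast; ring),
      Finset.prod_congr rfl (fun k _ => show a + ((k + 1 : ℕ) : ℝ) = a + 1 + k by
        push_cast; ring)]
    have hQ : 0 < ∏ k ∈ Finset.range i, (a + 1 + k) :=
      Finset.prod_pos fun k _ => by positivity
    have hci : c + i ≠ 0 := by positivity
    have hai : a + i + 1 ≠ 0 := by positivity
    have hai' : a + ((i : ℝ) + 1) ≠ 0 := by positivity
    have hfi : (i.factorial : ℝ) ≠ 0 := by positivity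
    have hfmi : ((m - i).factorial : ℝ) ≠ 0 := by positivity
    have hfm : ((m + 1).factorial : ℝ) ≠ 0 := by positivity
    push_cast
    simp only [add_zero]
    field_simp
    ring
  rw [Finset.sum_congr rfl hterm, ← Finset.mul_sum, sum_alternating_choose_mul_prod_div m _ hc0,
    show ((j + m + 1 : ℕ) : ℝ) + 1 / 2 = ((j : ℝ) + 1 / 2) + ((m + 1 : ℕ) : ℝ) by
      push_cast; ring,
    rbinom_add_natCast, ← hc,
    show (n : ℝ) / 2 + ((j + m + 1 : ℕ) : ℝ) + 1 / 2 = c + ((m + 1 : ℕ) : ℝ) by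
      rw [hc]; push_cast; ring,
    Real.Gamma_add_natCast_eq_prod hc0, show 2 * (j : ℝ) + n / 2 = a by rw [ha]; ring,
    Finset.prod_range_succ (fun k : ℕ => (j : ℝ) + 1 / 2 + 1 + k),
    show a + 2 - c = (j : ℝ) + 1 / 2 + 1 by rw [ha, hc]; ring]
  have hG : Real.Gamma c ≠ 0 := (Real.Gamma_pos_of_pos hc0).ne'
  have hQ : 0 < ∏ k ∈ Finset.range (m + 1), (c + k) :=
    Finset.prod_pos fun k _ => by positivity
  have hfm : ((m + 1).factorial : ℝ) ≠ 0 := by positivity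
  have hN : 2 * ((j + m + 1 : ℕ) : ℝ) + 1 ≠ 0 := by positivity
  generalize ∏ k ∈ Finset.range m, ((j : ℝ) + 1 / 2 + 1 + k) = R
  field_simp
  push_cast
  ring
end

section
/- Let n ≥ 1 be an integer and let N, p, j, i be integers with N−1 ≥ p ≥ j+i ≥ 0, j ≥ 0, i ≥ 0, and set m = p+1−i. Then ∑_{s=0}^{N−m} (−1)^s · binom(n/2+N+m+s−1, N−j) · binom(n/2+j+m+s−1, s) / [ (m+s+n/2−1/2) · (N−m−s)! · Γ(n/2+2m+i+s) ] = (N−m−i)! · (m+i−j)! · Γ(m+n/2−1/2) / [ (N−j)! · Γ(n/2+2m+i) · Γ(N+n/2+1/2) ] · binom(N−1/2, N−m−i) · binom(n/2+2m+i−1, m+i−j). -/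
open Finset

/-- `Γ(x + k) = x (x + 1) ⋯ (x + k - 1) Γ(x)` for `x > 0`. -/
lemma Gamma_add_nat_eq_prod {x : ℝ} (hx : 0 < x) (k : ℕ) :
    Real.Gamma (x + k) = (∏ l ∈ range k, (x + l)) * Real.Gamma x := by
  induction k with
  | zero => simp
  | succ k ih =>
    have hk : x + k ≠ 0 := by positivity
    rw [prod_range_succ, Nat.cast_succ, ← add_assoc, Real.Gamma_add_one hk, ih]
    ring

lemma rbinom_mul_factorial (x : ℝ) (k : ℕ) :
    rbinom (x + k - 1) k * (k.factorial : ℝ) = ∏ l ∈ range k, (x + l) := by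
  have hk : (k.factorial : ℝ) ≠ 0 := by positivity
  rw [rbinom, div_mul_cancel₀ _ hk, ← prod_range_reflect]
  refine prod_congr rfl fun l hl => ?_
  have h : l + 1 ≤ k := mem_range.mp hl
  rw [Nat.sub_sub, Nat.cast_sub (by omega)]
  push_cast
  ring

lemma rbinom_eq_Gamma_div {x : ℝ} (hx : 0 < x) (k : ℕ) :
    rbinom (x + k - 1) k = Real.Gamma (x + k) / ((k.factorial : ℝ) * Real.Gamma x) := by
  have hk : (k.factorial : ℝ) ≠ 0 := by positivity
  have hG : Real.Gamma x ≠ 0 := (Real.Gamma_pos_of_pos hx).ne'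
  rw [Gamma_add_nat_eq_prod hx, ← rbinom_mul_factorial]
  field_simp

lemma prod_range_erase_sub (s d : ℕ) :
    ∏ t ∈ (range (s + d + 1)).erase s, ((s : ℝ) - t)
      = (-1) ^ d * (s.factorial : ℝ) * (d.factorial : ℝ) := by
  induction d with
  | zero =>
    have h : (range (s + 0 + 1)).erase s = range s := by
      ext t; simp only [mem_erase, mem_range]; omega
    rw [h, ← prod_range_add_one_eq_factorial, ← prod_range_reflect]
    push_cast
    simp only [pow_zero, one_mul, Nat.factorial_zero, Nat.cast_one, mul_one]
    refine prod_congr rfl fun l hl => ?_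
    have h : l + 1 ≤ s := mem_range.mp hl
    rw [Nat.sub_sub, Nat.cast_sub (by omega)]
    push_cast
    ring
  | succ d ih =>
    have h : (range (s + (d + 1) + 1)).erase s
        = insert (s + d + 1) ((range (s + d + 1)).erase s) := by
      ext t; simp only [mem_erase, mem_insert, mem_range]; omega
    rw [h, prod_insert (by simp), ih, Nat.factorial_succ]
    push_cast
    ring

/-- Partial fraction expansion of `P(-c) / (c (c + 1) ⋯ (c + M))` for `deg P ≤ M`. -/
lemma sum_eval_div_add (P : Polynomial ℝ) (M : ℕ) (hP : P.degree < (M + 1 : ℕ))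
    {c : ℝ} (hc : 0 < c) :
    ∑ s ∈ range (M + 1), (-1 : ℝ) ^ s * P.eval (s : ℝ) /
        ((c + s) * (s.factorial : ℝ) * ((M - s).factorial : ℝ))
      = P.eval (-c) / ∏ k ∈ range (M + 1), (c + k) := by
  have hinj : Set.InjOn (fun k : ℕ => (k : ℝ)) (range (M + 1) : Set ℕ) :=
    Nat.cast_injective.injOn
  have hI := Lagrange.eq_interpolate (f := P) hinj (by simpa using hP)
  have hne : ∀ k ∈ range (M + 1), -c ≠ (k : ℝ) := fun k _ h => by
    have : (0 : ℝ) ≤ k := k.cast_nonneg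
    linarith
  have hprod : (∏ k ∈ range (M + 1), (c + k)) ≠ 0 :=
    prod_ne_zero_iff.mpr fun k _ => by positivity
  have hnodal : ∏ k ∈ range (M + 1), (-c - (k : ℝ))
      = (-1) ^ (M + 1) * ∏ k ∈ range (M + 1), (c + k) := by
    rw [← card_range (M + 1), ← prod_const, card_range, ← prod_mul_distrib]
    exact prod_congr rfl fun k _ => by ring
  have hev := congrArg (Polynomial.eval (-c)) hI
  rw [Lagrange.eval_interpolate_not_at_node _ hne, Lagrange.eval_nodal, hnodal] at hev
  rw [hev, mul_right_comm, mul_div_assoc, div_self hprod, mul_one, mul_sum]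
  refine sum_congr rfl fun s hs => ?_
  obtain ⟨d, rfl⟩ := Nat.exists_eq_add_of_le (Nat.lt_succ_iff.mp (mem_range.mp hs))
  have hcs : c + s ≠ 0 := by positivity
  rw [Lagrange.nodalWeight, prod_inv_distrib, prod_range_erase_sub, Nat.add_sub_cancel_left]
  have hinv : (-c - (s : ℝ))⁻¹ = -(c + s)⁻¹ := by
    rw [← inv_neg]; congr 1; ring
  rw [hinv]
  field_simp
  ring

/-- The case `m = j + d`, `N = m + i + K`, with `n / 2` replaced by a real `a > 1 / 2 - m`. -/
lemma sum_rbinom_mul_rbinom_div (a : ℝ) (j d i K : ℕ) (m N : ℝ) (hm : m = j + d)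
    (hN : N = m + i + K) (ha : 0 < m + a - 1 / 2) :
    ∑ s ∈ range (i + K + 1),
        (-1 : ℝ) ^ s * rbinom (a + N + m + s - 1) (d + i + K) * rbinom (a + j + m + s - 1) s /
        ((m + s + a - 1 / 2) * ((i + K - s).factorial : ℝ) * Real.Gamma (a + 2 * m + i + s))
      = (K.factorial : ℝ) * ((d + i).factorial : ℝ) * Real.Gamma (m + a - 1 / 2) /
        (((d + i + K).factorial : ℝ) * Real.Gamma (a + 2 * m + i)
          * Real.Gamma (N + a + 1 / 2))
        * rbinom (N - 1 / 2) K * rbinom (a + 2 * m + i - 1) (d + i) := by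
  have hj : (0 : ℝ) ≤ j := j.cast_nonneg
  have hd : (0 : ℝ) ≤ d := d.cast_nonneg
  have hi : (0 : ℝ) ≤ i := i.cast_nonneg
  have hx : 0 < a + j + m := by linarith
  have hb : 0 < a + 2 * m + i := by linarith
  set c : ℝ := m + a - 1 / 2 with hc
  set b : ℝ := a + 2 * m + i with hbdef
  let P : Polynomial ℝ := ∏ l ∈ range K, (Polynomial.X + Polynomial.C (b + l))
  have hPdeg : P.degree < (i + K + 1 : ℕ) := by
    rw [Polynomial.degree_prod]
    simp only [Polynomial.degree_X_add_C, sum_const, card_range, nsmul_one]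
    exact_mod_cast (by omega : K < i + K + 1)
  have hPeval (y : ℝ) : P.eval y = ∏ l ∈ range K, (y + b + l) := by
    simp [P, Polynomial.eval_prod, add_assoc]
  have key := sum_eval_div_add P (i + K) hPdeg ha
  have hterm : ∀ s ∈ range (i + K + 1),
      (-1 : ℝ) ^ s * rbinom (a + N + m + s - 1) (d + i + K) * rbinom (a + j + m + s - 1) s /
        ((m + s + a - 1 / 2) * ((i + K - s).factorial : ℝ) * Real.Gamma (b + s))
      = ((d + i + K).factorial * Real.Gamma (a + j + m) : ℝ)⁻¹ *
        ((-1 : ℝ) ^ s * P.eval (s : ℝ) /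
          ((c + s) * (s.factorial : ℝ) * ((i + K - s).factorial : ℝ))) := by
    intro s _
    have hs : (0 : ℝ) ≤ s := s.cast_nonneg
    have hxs : 0 < a + j + m + s := by linarith
    have hbs : 0 < b + s := by linarith
    have h₁ : a + N + m + s - 1 = (a + j + m + s) + (d + i + K : ℕ) - 1 := by
      push_cast; rw [hN, hm]; ring
    have h₂ : (a + j + m + s) + (d + i + K : ℕ) = b + s + K := by
      push_cast; rw [hbdef, hm]; ring
    have h₃ : m + s + a - 1 / 2 = c + s := by rw [hc]; ring
    have hcs : c + s ≠ 0 := by positivity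
    have hG₁ := (Real.Gamma_pos_of_pos hx).ne'
    have hG₂ := (Real.Gamma_pos_of_pos hxs).ne'
    have hG₃ := (Real.Gamma_pos_of_pos hbs).ne'
    rw [h₁, rbinom_eq_Gamma_div hxs, rbinom_eq_Gamma_div hx, h₂, Gamma_add_nat_eq_prod hbs, h₃,
      hPeval, add_comm (s : ℝ) b]
    field_simp
  rw [sum_congr rfl hterm, ← mul_sum, key]
  have hcG := Gamma_add_nat_eq_prod ha (i + K + 1)
  have h₁ : N + a + 1 / 2 = c + (i + K + 1 : ℕ) := by
    push_cast; rw [hc, hN]; ring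
  have h₂ : N - 1 / 2 = (-c + b) + K - 1 := by rw [hN, hc, hbdef]; ring
  have h₃ : b = (a + j + m) + (d + i : ℕ) := by push_cast; rw [hbdef, hm]; ring
  have hR : rbinom (N - 1 / 2) K * (K.factorial : ℝ) = P.eval (-c) := by
    rw [h₂, rbinom_mul_factorial, hPeval]
  have hB : rbinom (b - 1) (d + i)
      = Real.Gamma b / (((d + i).factorial : ℝ) * Real.Gamma (a + j + m)) := by
    rw [h₃, rbinom_eq_Gamma_div hx]
  have hG₁ := (Real.Gamma_pos_of_pos hx).ne'
  have hG₂ := (Real.Gamma_pos_of_pos hb).ne'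
  have hG₃ := (Real.Gamma_pos_of_pos ha).ne'
  have hprod : (∏ k ∈ range (i + K + 1), (c + k)) ≠ 0 :=
    prod_ne_zero_iff.mpr fun k _ => by positivity
  rw [h₁, hcG, hB, ← hR]
  field_simp

theorem stmt1 (n N p j i m : ℕ) (hn : 1 ≤ n) (hpN : p + 1 ≤ N) (hji : j + i ≤ p)
    (hm : m = p + 1 - i) :
    ∑ s ∈ Finset.range (N - m + 1),
        (-1 : ℝ) ^ s * rbinom ((n : ℝ) / 2 + N + m + s - 1) (N - j)
          * rbinom ((n : ℝ) / 2 + j + m + s - 1) s /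
        (((m : ℝ) + s + (n : ℝ) / 2 - 1 / 2) * ((N - m - s).factorial : ℝ)
          * Real.Gamma ((n : ℝ) / 2 + 2 * m + i + s))
      = ((N - m - i).factorial : ℝ) * ((m + i - j).factorial : ℝ)
          * Real.Gamma ((m : ℝ) + n / 2 - 1 / 2) /
        (((N - j).factorial : ℝ) * Real.Gamma ((n : ℝ) / 2 + 2 * m + i)
          * Real.Gamma ((N : ℝ) + n / 2 + 1 / 2))
        * rbinom ((N : ℝ) - 1 / 2) (N - m - i)
        * rbinom ((n : ℝ) / 2 + 2 * m + i - 1) (m + i - j) := by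
  obtain ⟨d, rfl⟩ : ∃ d, m = j + d := Nat.exists_eq_add_of_le (by omega)
  obtain ⟨K, rfl⟩ : ∃ K, N = j + d + i + K := Nat.exists_eq_add_of_le (by omega)
  have hn' : (1 : ℝ) ≤ n := by exact_mod_cast hn
  have hm' : (1 : ℝ) ≤ (j + d : ℕ) := by exact_mod_cast (by omega : 1 ≤ j + d)
  have h := sum_rbinom_mul_rbinom_div ((n : ℝ) / 2) j d i K (j + d : ℕ) (j + d + i + K : ℕ)
    (by push_cast; ring) (by push_cast; ring) (by linarith)
  rwa [show j + d + i + K - (j + d) = i + K by omega,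
    show j + d + i + K - j = d + i + K by omega,
    show i + K - i = K by omega, show j + d + i - j = d + i by omega]
end

section
/- Let n ≥ 1 and N ≥ 1 be integers, and let m ≥ 1 and i ≥ 0 be integers with m+i ≤ N. Then ∑_{s=0}^{N−m} (−1)^s · binom(n/2+N+m+s−1, N−m−i) / [ s! · (N−m−s)! · (m+s+n/2−1/2) ] = Γ(m+n/2−1/2) / Γ(N+n/2+1/2) · binom(N−1/2, N−m−i). -/
open Finset

/-- The barycentric weights of the nodes `0, 1, …, s + t`. -/
lemma prod_range_erase_natCast_sub (s t : ℕ) :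
    ∏ j ∈ (range (s + t + 1)).erase s, ((s : ℝ) - j)
      = (-1) ^ t * ((s.factorial : ℝ) * (t.factorial : ℝ)) := by
  induction t with
  | zero =>
    have h : (range (s + 0 + 1)).erase s = range s := by
      ext j; simp only [mem_erase, mem_range]; omega
    rw [h, ← prod_range_reflect, ← prod_range_add_one_eq_factorial]
    push_cast
    simp only [pow_zero, one_mul, Nat.factorial_zero, Nat.cast_one, mul_one]
    refine prod_congr rfl fun j hj => ?_
    have hj' : s - 1 - j + (j + 1) = s := by have := mem_range.1 hj; omega
    have hc : ((s - 1 - j : ℕ) : ℝ) + (j + 1) = s := by exact_mod_cast hj'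
    linarith
  | succ t ih =>
    have h : (range (s + (t + 1) + 1)).erase s
        = insert (s + t + 1) ((range (s + t + 1)).erase s) := by
      ext j; simp only [mem_erase, mem_range, mem_insert]; omega
    rw [h, prod_insert (by simp), ih, Nat.factorial_succ]
    push_cast
    ring

/-- Partial fractions for `p / (x (x + 1) ⋯ (x + M))`, as Lagrange interpolation at `0, …, M`
evaluated at `-a`. -/
lemma sum_neg_one_pow_mul_eval_div (p : Polynomial ℝ) (M : ℕ) (hp : p.natDegree ≤ M) (a : ℝ)
    (ha : 0 < a) :
    ∑ s ∈ range (M + 1), (-1 : ℝ) ^ s * p.eval (s : ℝ) /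
        ((s.factorial : ℝ) * ((M - s).factorial : ℝ) * (a + s))
      = p.eval (-a) / ∏ j ∈ range (M + 1), (a + j) := by
  have hpos (j : ℕ) : 0 < a + j := by positivity
  have hprod : 0 < ∏ j ∈ range (M + 1), (a + j) := prod_pos fun j _ => hpos j
  have hdeg : p.degree < #(range (M + 1)) := by
    rw [card_range]
    exact Polynomial.degree_le_natDegree.trans_lt (by exact_mod_cast Nat.lt_succ_of_le hp)
  have hinterp := congrArg (Polynomial.eval (-a)) (Lagrange.eq_interpolate
    (v := fun j : ℕ => (j : ℝ)) (fun _ _ _ _ h => Nat.cast_injective h) hdeg)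
  rw [Lagrange.eval_interpolate_not_at_node _
    (fun j _ h => by have := hpos j; linarith), Lagrange.eval_nodal] at hinterp
  have hnodal : ∏ j ∈ range (M + 1), (-a - (j : ℝ))
      = (-1) ^ (M + 1) * ∏ j ∈ range (M + 1), (a + j) := by
    rw [← card_range (M + 1), ← prod_const, card_range, ← prod_mul_distrib]
    exact prod_congr rfl fun j _ => by ring
  rw [hinterp, hnodal, eq_div_iff hprod.ne', mul_comm, mul_right_comm, mul_comm, mul_sum]
  congr 1
  refine sum_congr rfl fun s hs => ?_
  obtain ⟨t, rfl⟩ := Nat.exists_eq_add_of_le (Nat.lt_succ_iff.1 (mem_range.1 hs))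
  have hs' := (hpos s).ne'
  have hsub : (-a - (s : ℝ))⁻¹ = -(a + s)⁻¹ := by
    rw [← inv_neg]; congr 1; ring
  have hsign : (-1 : ℝ) ^ (s + t + 1) = -((-1) ^ s * (-1) ^ t) := by ring
  have hsq : ((-1 : ℝ) ^ t) * (-1) ^ t = 1 := by rw [← mul_pow]; simp
  rw [Lagrange.nodalWeight, prod_inv_distrib, prod_range_erase_natCast_sub, hsub, hsign,
    Nat.add_sub_cancel_left, mul_inv, ← inv_pow, inv_neg_one]
  field_simp
  linear_combination -(Polynomial.eval (s : ℝ) p) * hsq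

lemma Gamma_add_natCast_eq_prod_mul (a : ℝ) (ha : 0 < a) (k : ℕ) :
    Real.Gamma (a + k) = (∏ j ∈ range k, (a + j)) * Real.Gamma a := by
  induction k with
  | zero => simp
  | succ k ih =>
    rw [prod_range_succ, Nat.cast_succ, ← add_assoc, Real.Gamma_add_one (by positivity), ih]
    ring

lemma exists_polynomial_eval_eq_rbinom (c : ℝ) (k : ℕ) :
    ∃ p : Polynomial ℝ, p.natDegree ≤ k ∧ ∀ x, p.eval x = rbinom (c + x) k := by
  refine ⟨Polynomial.C (k.factorial : ℝ)⁻¹ *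
    ∏ i ∈ range k, (Polynomial.X + Polynomial.C (c - i)), ?_, fun x => ?_⟩
  · refine (Polynomial.natDegree_C_mul_le _ _).trans ((Polynomial.natDegree_prod_le _ _).trans ?_)
    simp only [Polynomial.natDegree_X_add_C, sum_const, card_range, smul_eq_mul, mul_one, le_refl]
  · rw [Polynomial.eval_mul, Polynomial.eval_C, Polynomial.eval_prod, rbinom, div_eq_inv_mul]
    congr 1
    refine prod_congr rfl fun i _ => ?_
    rw [Polynomial.eval_add, Polynomial.eval_X, Polynomial.eval_C]
    ring

theorem stmt2 (n N m i : ℕ) (hn : 1 ≤ n) (hN : 1 ≤ N) (hm : 1 ≤ m) (hmi : m + i ≤ N) :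
    ∑ s ∈ Finset.range (N - m + 1),
        (-1 : ℝ) ^ s * rbinom ((n : ℝ) / 2 + N + m + s - 1) (N - m - i) /
          ((s.factorial : ℝ) * ((N - m - s).factorial : ℝ)
            * ((m : ℝ) + s + (n : ℝ) / 2 - 1 / 2))
      = Real.Gamma ((m : ℝ) + n / 2 - 1 / 2) / Real.Gamma ((N : ℝ) + n / 2 + 1 / 2)
          * rbinom ((N : ℝ) - 1 / 2) (N - m - i) := by
  obtain ⟨M, rfl⟩ := Nat.exists_eq_add_of_le (show m ≤ N by omega)
  rw [Nat.add_sub_cancel_left]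
  have hm' : (1 : ℝ) ≤ m := by exact_mod_cast hm
  have ha : (0 : ℝ) < m + n / 2 - 1 / 2 := by
    have : (0 : ℝ) ≤ n := n.cast_nonneg
    linarith
  obtain ⟨p, hp, hpeval⟩ :=
    exists_polynomial_eval_eq_rbinom ((n : ℝ) / 2 + (m + M : ℕ) + m - 1) (M - i)
  have hsum := sum_neg_one_pow_mul_eval_div p M (hp.trans (Nat.sub_le _ _)) _ ha
  have hΓ := Gamma_add_natCast_eq_prod_mul _ ha (M + 1)
  rw [show ((m : ℝ) + n / 2 - 1 / 2) + (M + 1 : ℕ) = (m + M : ℕ) + n / 2 + 1 / 2 by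
    push_cast; ring] at hΓ
  have hΓpos := (Real.Gamma_pos_of_pos ha).ne'
  rw [hpeval, show (n : ℝ) / 2 + (m + M : ℕ) + m - 1 + -((m : ℝ) + n / 2 - 1 / 2)
    = (m + M : ℕ) - 1 / 2 by ring] at hsum
  rw [hΓ, div_mul_cancel_right₀ hΓpos, ← div_eq_inv_mul, ← hsum]
  refine sum_congr rfl fun s _ => ?_
  rw [hpeval]
  congr 2
  · congr 2
    ring
  · ring
end

section
/- Let N ≥ 0 and L be integers with 0 ≤ L ≤ 2N, and let m be a real number. Then ∑_{i=L}^{2N} (−1)^i · binom(N−m, i) · binom(i, L) = (−1)^L · binom(N−m, L) · binom(m+N, 2N−L). -/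
open Finset

/-- Trinomial revision. -/
theorem rbinom_add_mul_choose (x : ℝ) (L j : ℕ) :
    rbinom x (L + j) * ((L + j).choose L : ℝ) = rbinom x L * rbinom (x - L) j := by
  have hfact : ((L + j).choose L : ℝ) * L.factorial * j.factorial = (L + j).factorial := by
    have h := Nat.choose_mul_factorial_mul_factorial (Nat.le_add_right L j)
    rw [Nat.add_sub_cancel_left] at h
    exact_mod_cast h
  have hprod : ∏ i ∈ range j, (x - ((L + i : ℕ) : ℝ)) = ∏ i ∈ range j, (x - L - i) :=
    prod_congr rfl fun i _ => by push_cast; ring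
  have hL : (L.factorial : ℝ) ≠ 0 := by positivity
  have hj : (j.factorial : ℝ) ≠ 0 := by positivity
  have hc : ((L + j).choose L : ℝ) ≠ 0 := by
    exact_mod_cast (Nat.choose_pos (Nat.le_add_right L j)).ne'
  rw [rbinom, rbinom, rbinom, prod_range_add, hprod, ← hfact]
  field_simp

/-- Pascal's rule. -/
theorem rbinom_add_one_succ (x : ℝ) (k : ℕ) :
    rbinom (x + 1) (k + 1) = rbinom x k + rbinom x (k + 1) := by
  have hprod : ∏ i ∈ range k, (x + 1 - ((i + 1 : ℕ) : ℝ)) = ∏ i ∈ range k, (x - i) :=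
    prod_congr rfl fun i _ => by push_cast; ring
  have hk : (k.factorial : ℝ) ≠ 0 := by positivity
  have hk' : (k : ℝ) + 1 ≠ 0 := by positivity
  rw [rbinom, rbinom, rbinom, prod_range_succ', hprod, prod_range_succ, Nat.factorial_succ]
  push_cast
  field_simp
  ring

theorem rbinom_natCast_sub_succ (y : ℝ) (n : ℕ) :
    rbinom (n - y) (n + 1) = (-1) ^ (n + 1) * rbinom y (n + 1) := by
  have hprod : ∏ i ∈ range (n + 1), ((n : ℝ) - y - i)
      = (-1) ^ (n + 1) * ∏ i ∈ range (n + 1), (y - i) := by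
    rw [← prod_range_reflect, ← card_range (n + 1), ← prod_const, card_range,
      ← prod_mul_distrib]
    refine prod_congr rfl fun i hi => ?_
    have hin : i ≤ n := Nat.lt_succ_iff.mp (mem_range.mp hi)
    rw [Nat.add_sub_cancel, Nat.cast_sub hin]
    ring
  rw [rbinom, rbinom, hprod, mul_div_assoc]

theorem sum_range_neg_one_pow_mul_rbinom (y : ℝ) (n : ℕ) :
    ∑ j ∈ range (n + 1), (-1 : ℝ) ^ j * rbinom y j = rbinom (n - y) n := by
  induction n with
  | zero => simp [rbinom]
  | succ n ih =>
    rw [sum_range_succ, ih, ← rbinom_natCast_sub_succ, ← rbinom_add_one_succ]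
    push_cast
    ring_nf

theorem stmt3 (N L : ℕ) (hL : L ≤ 2 * N) (m : ℝ) :
    ∑ i ∈ Finset.Icc L (2 * N),
        (-1 : ℝ) ^ i * rbinom ((N : ℝ) - m) i * (i.choose L : ℝ)
      = (-1 : ℝ) ^ L * rbinom ((N : ℝ) - m) L * rbinom (m + N) (2 * N - L) := by
  have harg : m + N = ((2 * N - L : ℕ) : ℝ) - ((N : ℝ) - m - L) := by
    rw [Nat.cast_sub hL]
    push_cast
    ring
  rw [harg, ← sum_range_neg_one_pow_mul_rbinom, mul_sum, ← Ico_add_one_right_eq_Icc,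
    sum_Ico_eq_sum_range, Nat.sub_add_comm hL]
  refine sum_congr rfl fun j _ => ?_
  rw [mul_assoc, rbinom_add_mul_choose, pow_add]
  ring
end

section
/- Let N ≥ 1, m ≥ 1 and L be integers with 0 ≤ L ≤ 2N and L−N+m−1 ≥ 0. Then ∑_{i=L}^{2N} ( (i−N+m−1)! / i! ) · binom(i, L) = ( (L−N+m−1)! / L! ) · binom(N+m, 2N−L). -/
open Finset

theorem factorial_div_factorial_mul_choose (a L j : ℕ) :
    ((a + j).factorial : ℝ) / ((L + j).factorial : ℝ) * ((L + j).choose L : ℝ)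
      = (a.factorial : ℝ) / (L.factorial : ℝ) * ((j + a).choose a : ℝ) := by
  rw [Nat.cast_add_choose, add_comm j a, Nat.cast_add_choose]
  have h₁ := Nat.factorial_ne_zero (L + j)
  have h₂ := Nat.factorial_ne_zero a
  field_simp

theorem stmt4 (N m L : ℕ) (hN : 1 ≤ N) (hm : 1 ≤ m) (hL : L ≤ 2 * N) (h : N + 1 ≤ L + m) :
    ∑ i ∈ Finset.Icc L (2 * N),
        ((i + m - N - 1).factorial : ℝ) / (i.factorial : ℝ) * (i.choose L : ℝ)
      = ((L + m - N - 1).factorial : ℝ) / (L.factorial : ℝ)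
          * ((N + m).choose (2 * N - L) : ℝ) := by
  obtain ⟨a, ha⟩ : ∃ a, L + m = a + N + 1 := ⟨L + m - N - 1, by omega⟩
  obtain ⟨K, hK⟩ : ∃ K, 2 * N = L + K := ⟨2 * N - L, by omega⟩
  have hIcc : Finset.Icc L (2 * N) = Finset.Ico L (L + K + 1) := by
    ext i
    simp only [Finset.mem_Icc, Finset.mem_Ico]
    omega
  have hterm (j : ℕ) : L + j + m - N - 1 = a + j := by omega
  have hchoose : (N + m).choose (2 * N - L) = (K + a + 1).choose (a + 1) := by
    rw [show N + m = K + (a + 1) by omega, show 2 * N - L = K by omega, ← add_assoc]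
    exact Nat.choose_symm_of_eq_add (by omega)
  rw [hIcc, Finset.sum_Ico_eq_sum_range, show L + K + 1 - L = K + 1 by omega,
    show L + m - N - 1 = a by omega, hchoose, ← Nat.sum_range_add_choose, Nat.cast_sum,
    Finset.mul_sum]
  simp only [hterm, factorial_div_factorial_mul_choose]
end

section
/- Let n ≥ 1 and let j, k be natural numbers. If j ≤ k, then for every x ∈ ℝ^n, Δ^j(|x|^{2k}) = 4^j · j! · ( k!/(k−j)! ) · binom(n/2+k−1, j) · |x|^{2(k−j)}. If j > k, then Δ^j(|x|^{2k}) = 0 for every x ∈ ℝ^n. -/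
open Finset

/-- Partial derivative along the `i`-th standard coordinate direction of `ℝⁿ`. -/
noncomputable def pd (n : ℕ) (i : Fin n) (f : EuclideanSpace ℝ (Fin n) → ℝ) :
    EuclideanSpace ℝ (Fin n) → ℝ :=
  fun x => fderiv ℝ f x (EuclideanSpace.single i 1)

/-- The Laplacian `Δf = ∑ᵢ ∂²f/∂xᵢ²` on `ℝⁿ`. -/
noncomputable def lapl (n : ℕ) (f : EuclideanSpace ℝ (Fin n) → ℝ) :
    EuclideanSpace ℝ (Fin n) → ℝ :=
  fun x => ∑ i : Fin n, pd n i (pd n i f) x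

theorem pd_const_mul (n : ℕ) (i : Fin n) (c : ℝ) (f : EuclideanSpace ℝ (Fin n) → ℝ) :
    pd n i (fun y => c * f y) = fun x => c * pd n i f x := by
  funext x
  have h : fderiv ℝ (fun y => c * f y) x = c • fderiv ℝ f x :=
    congrFun (fderiv_const_smul_field c) x
  simp [pd, h]

theorem lapl_const_mul (n : ℕ) (c : ℝ) (f : EuclideanSpace ℝ (Fin n) → ℝ) :
    lapl n (fun y => c * f y) = fun x => c * lapl n f x := by
  funext x
  simp only [lapl, pd_const_mul, Finset.mul_sum]

theorem hasFDerivAt_norm_pow_two_mul {n : ℕ} (m : ℕ) (x : EuclideanSpace ℝ (Fin n)) :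
    HasFDerivAt (fun y : EuclideanSpace ℝ (Fin n) => ‖y‖ ^ (2 * m))
      ((2 * m * ‖x‖ ^ (2 * (m - 1))) • innerSL ℝ x) x := by
  have h := (hasStrictFDerivAt_norm_sq x).hasFDerivAt.pow m
  simp only [← pow_mul] at h
  refine h.congr_fderiv ?_
  ext v
  simp
  ring

theorem pd_norm_pow_two_mul {n : ℕ} (i : Fin n) (m : ℕ) :
    pd n i (fun y => ‖y‖ ^ (2 * m)) = fun x => 2 * m * (‖x‖ ^ (2 * (m - 1)) * x i) := by
  funext x
  simp only [pd, (hasFDerivAt_norm_pow_two_mul m x).fderiv]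
  simp [EuclideanSpace.inner_single_right, mul_assoc]

theorem pd_norm_pow_two_mul_mul_coord {n : ℕ} (i : Fin n) (m : ℕ) :
    pd n i (fun y => ‖y‖ ^ (2 * m) * y i) =
      fun x => ‖x‖ ^ (2 * m) + 2 * m * ‖x‖ ^ (2 * (m - 1)) * x i ^ 2 := by
  funext x
  have h := (hasFDerivAt_norm_pow_two_mul m x).mul
    (EuclideanSpace.proj i : EuclideanSpace ℝ (Fin n) →L[ℝ] ℝ).hasFDerivAt
  have h' : HasFDerivAt (fun y : EuclideanSpace ℝ (Fin n) => ‖y‖ ^ (2 * m) * y i) _ x := h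
  simp only [pd, h'.fderiv]
  simp [EuclideanSpace.inner_single_right]
  ring

theorem lapl_norm_pow_two_mul (n m : ℕ) :
    lapl n (fun y => ‖y‖ ^ (2 * m)) =
      fun x => 4 * m * ((n : ℝ) / 2 + m - 1) * ‖x‖ ^ (2 * (m - 1)) := by
  funext x
  simp only [lapl, pd_norm_pow_two_mul, pd_const_mul, pd_norm_pow_two_mul_mul_coord,
    ← Finset.mul_sum, Finset.sum_add_distrib]
  rw [← EuclideanSpace.real_norm_sq_eq]
  rcases m with _ | _ | m
  · simp
  · simp
    ring
  · simp
    ring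

theorem iterate_lapl_norm_pow_two_mul (n j k : ℕ) :
    (lapl n)^[j] (fun y => ‖y‖ ^ (2 * k)) =
      fun x => 4 ^ j * (k.descFactorial j : ℝ) *
        (∏ i ∈ Finset.range j, ((n : ℝ) / 2 + k - 1 - i)) * ‖x‖ ^ (2 * (k - j)) := by
  induction j with
  | zero => simp
  | succ j ih =>
    rw [Function.iterate_succ_apply', ih, lapl_const_mul, lapl_norm_pow_two_mul]
    funext x
    rw [Nat.descFactorial_succ, Finset.prod_range_succ, Nat.sub_sub]
    rcases le_or_gt j k with h | h
    · push_cast [Nat.cast_sub h]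
      ring
    · simp [Nat.descFactorial_of_lt h]

theorem stmt6 (n j k : ℕ) (hn : 1 ≤ n) :
    (j ≤ k → ∀ x : EuclideanSpace ℝ (Fin n),
      (lapl n)^[j] (fun y => ‖y‖ ^ (2 * k)) x
        = 4 ^ j * (j.factorial : ℝ) * ((k.factorial : ℝ) / ((k - j).factorial : ℝ))
            * rbinom ((n : ℝ) / 2 + k - 1) j * ‖x‖ ^ (2 * (k - j)))
    ∧ (k < j → ∀ x : EuclideanSpace ℝ (Fin n),
      (lapl n)^[j] (fun y => ‖y‖ ^ (2 * k)) x = 0) := by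
  rw [iterate_lapl_norm_pow_two_mul]
  refine ⟨fun h x => ?_, fun h x => by simp [Nat.descFactorial_of_lt h]⟩
  rw [← Nat.factorial_mul_descFactorial h, rbinom]
  have hj : (j.factorial : ℝ) ≠ 0 := by positivity
  have hkj : ((k - j).factorial : ℝ) ≠ 0 := by positivity
  push_cast
  field_simp
end

section
/- Let n ≥ 1, let j ≥ 0 be an integer, and let P be a harmonic polynomial in n real variables which is homogeneous of degree 2j+1. Let k be a natural number. If 2j+1 ≤ k, then for every x ∈ ℝ^n, P(∂)(|x|^{2k}) = 2^{2j+1} · ( k!/(k−2j−1)! ) · P(x) · |x|^{2(k−2j−1)}. If k < 2j+1, then P(∂)(|x|^{2k}) = 0 for every x ∈ ℝ^n. -/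
open Finset

/-- Iterated partial derivative `∂^α` for a multi-index `α`. -/
noncomputable def pdMulti (n : ℕ) (α : Fin n →₀ ℕ) (f : EuclideanSpace ℝ (Fin n) → ℝ) :
    EuclideanSpace ℝ (Fin n) → ℝ :=
  (List.finRange n).foldr (fun i g => (pd n i)^[α i] g) f

/-- The constant-coefficient differential operator `P(∂) = ∑_α c_α ∂^α` associated to the
polynomial `P = ∑_α c_α x^α`. -/
noncomputable def polyOp (n : ℕ) (P : MvPolynomial (Fin n) ℝ)
    (f : EuclideanSpace ℝ (Fin n) → ℝ) : EuclideanSpace ℝ (Fin n) → ℝ :=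
  fun x => ∑ α ∈ P.support, P.coeff α * pdMulti n α f x

open MvPolynomial

namespace MvPolynomial

variable {n : ℕ}

theorem pderiv_pderiv_comm {σ R : Type*} [CommRing R] (i j : σ) (p : MvPolynomial σ R) :
    pderiv i (pderiv j p) = pderiv j (pderiv i p) := by
  classical
  have h : ⁅(pderiv i : Derivation R (MvPolynomial σ R) (MvPolynomial σ R)),
      (pderiv j : Derivation R (MvPolynomial σ R) (MvPolynomial σ R))⁆ = 0 := by
    refine derivation_ext fun l => ?_
    rw [Derivation.commutator_apply, pderiv_X, pderiv_X, Pi.single_apply, Pi.single_apply]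
    split_ifs <;> simp
  have h' := congrArg (fun D => D p) h
  simpa [Derivation.commutator_apply, sub_eq_zero] using h'

/-- The iterated formal partial derivative `∂^α` of a polynomial. -/
noncomputable def pderivMulti (α : Fin n →₀ ℕ) (Q : MvPolynomial (Fin n) ℝ) :
    MvPolynomial (Fin n) ℝ :=
  (List.finRange n).foldr (fun i g => (pderiv i)^[α i] g) Q

theorem pderivMulti_zero (Q : MvPolynomial (Fin n) ℝ) : pderivMulti 0 Q = Q := by
  simp [pderivMulti]

theorem foldr_pderiv_add_single (α : Fin n →₀ ℕ) (i : Fin n) (Q : MvPolynomial (Fin n) ℝ)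
    (l : List (Fin n)) (hl : l.Nodup) :
    l.foldr (fun j g => (pderiv j)^[(α + Finsupp.single i 1 : Fin n →₀ ℕ) j] g) Q =
      if i ∈ l then pderiv i (l.foldr (fun j g => (pderiv j)^[α j] g) Q)
      else l.foldr (fun j g => (pderiv j)^[α j] g) Q := by
  induction l with
  | nil => simp
  | cons a l ih =>
    obtain ⟨ha, hl⟩ := List.nodup_cons.1 hl
    rw [List.foldr_cons, ih hl, List.foldr_cons]
    by_cases hia : i = a
    · subst hia
      simp [ha, Function.iterate_succ_apply']
    · have hcomm : Function.Commute (pderiv (R := ℝ) a) (pderiv i) :=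
        pderiv_pderiv_comm a i
      by_cases hil : i ∈ l
      · simpa [hia, hil] using (hcomm.iterate_left (α a)).eq _
      · simp [hia, hil]

theorem pderivMulti_add_single (α : Fin n →₀ ℕ) (i : Fin n) (Q : MvPolynomial (Fin n) ℝ) :
    pderivMulti (α + Finsupp.single i 1) Q = pderiv i (pderivMulti α Q) := by
  simpa [pderivMulti] using foldr_pderiv_add_single α i Q (List.finRange n) (List.nodup_finRange n)

/-- The map `P ↦ P(∂) Q`, where derivatives are taken formally. -/
noncomputable def diffOp (Q : MvPolynomial (Fin n) ℝ) :
    MvPolynomial (Fin n) ℝ →ₗ[ℝ] MvPolynomial (Fin n) ℝ :=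
  (basisMonomials (Fin n) ℝ).constr ℝ fun α => pderivMulti α Q

theorem diffOp_monomial (Q : MvPolynomial (Fin n) ℝ) (α : Fin n →₀ ℕ) (c : ℝ) :
    diffOp Q (monomial α c) = c • pderivMulti α Q := by
  have h : monomial α c = c • basisMonomials (Fin n) ℝ α := by
    simp [smul_monomial]
  rw [h, map_smul, diffOp, Module.Basis.constr_basis]

theorem diffOp_eq_sum (Q P : MvPolynomial (Fin n) ℝ) :
    diffOp Q P = ∑ α ∈ P.support, P.coeff α • pderivMulti α Q := by
  conv_lhs => rw [P.as_sum, map_sum]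
  simp only [diffOp_monomial]

theorem diffOp_X_mul (Q P : MvPolynomial (Fin n) ℝ) (i : Fin n) :
    diffOp Q (X i * P) = pderiv i (diffOp Q P) := by
  induction P using MvPolynomial.induction_on' with
  | monomial α c =>
    rw [mul_comm, X, monomial_mul, mul_one, diffOp_monomial, diffOp_monomial,
      pderivMulti_add_single, Derivation.map_smul]
  | add p q hp hq => rw [mul_add, map_add, map_add, map_add, hp, hq]

/-- The squared norm `∑ i, x_i ^ 2` as a polynomial. -/
noncomputable def normSqPoly (n : ℕ) : MvPolynomial (Fin n) ℝ := ∑ i, X i ^ 2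

theorem pderiv_normSqPoly (i : Fin n) : pderiv i (normSqPoly n) = 2 * X i := by
  classical
  simp [normSqPoly, pderiv_X, Pi.single_apply]

theorem pderiv_descFactorial_mul_normSqPoly_pow (k m : ℕ) (i : Fin n) :
    pderiv i ((k.descFactorial m : MvPolynomial (Fin n) ℝ) * normSqPoly n ^ (k - m)) =
      2 * X i * ((k.descFactorial (m + 1) : MvPolynomial (Fin n) ℝ)
        * normSqPoly n ^ (k - (m + 1))) := by
  rw [pderiv_mul, pderiv_pow, pderiv_normSqPoly, Derivation.map_natCast, Nat.descFactorial_succ,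
    Nat.sub_sub]
  push_cast
  ring

/-- Hobson's formula for the powers of the squared norm and a harmonic homogeneous `P`. -/
theorem diffOp_normSqPoly_pow (k d : ℕ) (P : MvPolynomial (Fin n) ℝ)
    (hharm : ∑ i, pderiv i (pderiv i P) = 0) (hhom : P.IsHomogeneous d) :
    diffOp (normSqPoly n ^ k) P =
      2 ^ d * ((k.descFactorial d : MvPolynomial (Fin n) ℝ) * normSqPoly n ^ (k - d)) * P := by
  induction d generalizing P with
  | zero =>
    rw [← totalDegree_zero_iff_isHomogeneous, totalDegree_eq_zero_iff_eq_C] at hhom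
    rw [hhom]
    nth_rw 1 [C_apply]
    rw [diffOp_monomial, pderivMulti_zero, smul_eq_C_mul]
    simp [mul_comm]
  | succ d ih =>
    have hpd (i : Fin n) : diffOp (normSqPoly n ^ k) (pderiv i P) =
        2 ^ d * ((k.descFactorial d : MvPolynomial (Fin n) ℝ) * normSqPoly n ^ (k - d))
          * pderiv i P := by
      refine ih _ ?_ hhom.pderiv
      have h := congrArg (pderiv i) hharm
      simpa only [map_sum, map_zero, pderiv_pderiv_comm i] using h
    have heuler := hhom.sum_X_mul_pderiv
    have htwo (i : Fin n) : pderiv i (2 ^ d : MvPolynomial (Fin n) ℝ) = 0 := by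
      have h := Derivation.map_natCast (pderiv (R := ℝ) i) (2 ^ d)
      simpa using h
    have hsum : (d + 1) • diffOp (normSqPoly n ^ k) P = (d + 1) •
        (2 ^ (d + 1) * ((k.descFactorial (d + 1) : MvPolynomial (Fin n) ℝ)
          * normSqPoly n ^ (k - (d + 1))) * P) := by
      rw [← map_nsmul, ← heuler, map_sum, ← mul_smul_comm, ← heuler]
      simp_rw [diffOp_X_mul, hpd, pderiv_mul (f := _ * _) (g := pderiv _ P),
        pderiv_mul (f := 2 ^ d), htwo, pderiv_descFactorial_mul_normSqPoly_pow,
        Finset.sum_add_distrib]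
      rw [← Finset.mul_sum, hharm, Finset.mul_sum, mul_zero, add_zero]
      exact Finset.sum_congr rfl fun i _ => by ring
    exact smul_right_injective _ (Nat.succ_ne_zero d) hsum

theorem hasFDerivAt_eval (Q : MvPolynomial (Fin n) ℝ) (x : EuclideanSpace ℝ (Fin n)) :
    HasFDerivAt (fun y : EuclideanSpace ℝ (Fin n) => eval (fun i => y i) Q)
      (∑ i, eval (fun i => x i) (pderiv i Q) • EuclideanSpace.proj (𝕜 := ℝ) i) x := by
  classical
  induction Q using MvPolynomial.induction_on with
  | C a => simpa using hasFDerivAt_const a x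
  | add p q hp hq =>
    simp only [map_add, add_smul, Finset.sum_add_distrib]
    exact hp.add hq
  | mul_X p j hp =>
    have hX : HasFDerivAt (fun y : EuclideanSpace ℝ (Fin n) => y j)
        (EuclideanSpace.proj (𝕜 := ℝ) j : EuclideanSpace ℝ (Fin n) →L[ℝ] ℝ) x :=
      (EuclideanSpace.proj (𝕜 := ℝ) j : EuclideanSpace ℝ (Fin n) →L[ℝ] ℝ).hasFDerivAt
    have h := hp.mul hX
    simp only [map_mul, eval_X]
    refine h.congr_fderiv ?_
    ext v
    simp [pderiv_X, Pi.single_apply, add_mul, Finset.sum_add_distrib, Finset.mul_sum,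
      apply_ite, mul_assoc]

end MvPolynomial

theorem pd_eval (n : ℕ) (i : Fin n) (Q : MvPolynomial (Fin n) ℝ) :
    pd n i (fun y => eval (fun l => y l) Q) = fun y => eval (fun l => y l) (pderiv i Q) := by
  funext x
  rw [pd, (hasFDerivAt_eval Q x).fderiv]
  simp

theorem pdMulti_eval (n : ℕ) (α : Fin n →₀ ℕ) (Q : MvPolynomial (Fin n) ℝ) :
    pdMulti n α (fun y => eval (fun l => y l) Q) =
      fun y => eval (fun l => y l) (pderivMulti α Q) := by
  unfold pdMulti pderivMulti
  induction List.finRange n with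
  | nil => rfl
  | cons a l ih =>
    rw [List.foldr_cons, List.foldr_cons, ih]
    exact (Function.Semiconj.iterate_right
      (f := fun Q : MvPolynomial (Fin n) ℝ =>
        fun y : EuclideanSpace ℝ (Fin n) => eval (fun l => y l) Q)
      (fun Q => (pd_eval n a Q).symm) (α a) _).symm

theorem polyOp_eval (n : ℕ) (P Q : MvPolynomial (Fin n) ℝ) (x : EuclideanSpace ℝ (Fin n)) :
    polyOp n P (fun y => eval (fun l => y l) Q) x = eval (fun l => x l) (diffOp Q P) := by
  simp [polyOp, diffOp_eq_sum, pdMulti_eval, map_sum, smul_eval]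

theorem eval_normSqPoly (n : ℕ) (x : EuclideanSpace ℝ (Fin n)) :
    eval (fun l => x l) (normSqPoly n) = ‖x‖ ^ 2 := by
  simp [normSqPoly, EuclideanSpace.norm_sq_eq]

theorem polyOp_norm_pow (n d k : ℕ) (P : MvPolynomial (Fin n) ℝ)
    (hharm : ∑ i : Fin n, pderiv i (pderiv i P) = 0) (hhom : P.IsHomogeneous d)
    (x : EuclideanSpace ℝ (Fin n)) :
    polyOp n P (fun y => ‖y‖ ^ (2 * k)) x =
      2 ^ d * (k.descFactorial d : ℝ) * eval (fun i => x i) P * ‖x‖ ^ (2 * (k - d)) := by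
  have h : (fun y : EuclideanSpace ℝ (Fin n) => ‖y‖ ^ (2 * k)) =
      fun y => eval (fun l => y l) (normSqPoly n ^ k) := by
    funext y
    rw [map_pow, eval_normSqPoly, pow_mul]
  rw [h, polyOp_eval, diffOp_normSqPoly_pow k d P hharm hhom]
  simp only [map_mul, map_pow, map_natCast, map_ofNat, eval_normSqPoly, pow_mul]
  ring

theorem stmt7 (n j k : ℕ) (hn : 1 ≤ n) (P : MvPolynomial (Fin n) ℝ)
    (hharm : ∑ i : Fin n, MvPolynomial.pderiv i (MvPolynomial.pderiv i P) = 0)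
    (hhom : P.IsHomogeneous (2 * j + 1)) :
    (2 * j + 1 ≤ k → ∀ x : EuclideanSpace ℝ (Fin n),
      polyOp n P (fun y => ‖y‖ ^ (2 * k)) x
        = 2 ^ (2 * j + 1) * ((k.factorial : ℝ) / ((k - (2 * j + 1)).factorial : ℝ))
            * MvPolynomial.eval (fun i => x i) P * ‖x‖ ^ (2 * (k - (2 * j + 1))))
    ∧ (k < 2 * j + 1 → ∀ x : EuclideanSpace ℝ (Fin n),
      polyOp n P (fun y => ‖y‖ ^ (2 * k)) x = 0) := by
  refine ⟨fun hk x => ?_, fun hk x => ?_⟩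
  · rw [polyOp_norm_pow n (2 * j + 1) k P hharm hhom, Nat.descFactorial_eq_div hk,
      Nat.cast_div (Nat.factorial_dvd_factorial (Nat.sub_le _ _))
        (Nat.cast_ne_zero.2 (Nat.factorial_ne_zero _))]
  · rw [polyOp_norm_pow n (2 * j + 1) k P hharm hhom, Nat.descFactorial_eq_zero_iff_lt.2 hk]
    simp
end

section
/- Let n ≥ 2 and N ≥ 1 be integers and let j be an integer with 0 ≤ j ≤ N−1. Then ∑_{L=N+1+j}^{2N} c_{N;L,j,L−N−j−1} / ( 2^{n/2+L−N+j} · Γ(n/2+L−N+j+1) ) = (1/2^{n/2}) · (−1)^j / ( 4^j (2j+1) Γ(n/2+2j+1) ). -/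
open Finset

/-- The constant `c_n = Γ((n−1)/2)/(2 π^{n/2} Γ(1/2))`. -/
noncomputable def cConst (n : ℕ) : ℝ :=
  Real.Gamma (((n : ℝ) - 1) / 2) / (2 * Real.pi ^ ((n : ℝ) / 2) * Real.Gamma (1 / 2))

/-- The constant `γ_{2j+1} = i^{−(2j+1)} π^{n/2} Γ(j+1/2)/Γ(n/2+j+1/2)`. -/
noncomputable def gammaConst (n j : ℕ) : ℂ :=
  Complex.I ^ (-(2 * (j : ℤ) + 1)) * ((Real.pi ^ ((n : ℝ) / 2) : ℝ) : ℂ)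
    * ((Real.Gamma ((j : ℝ) + 1 / 2) : ℝ) : ℂ)
    / ((Real.Gamma ((n : ℝ) / 2 + j + 1 / 2) : ℝ) : ℂ)

/-- The coefficient `c_{N;L,j,k}`. -/
noncomputable def cCoef (n N L j k : ℕ) : ℂ :=
  Complex.I * (-1 : ℂ) ^ k * ((cConst n : ℝ) : ℂ) * gammaConst n j
    * (2 : ℂ) ^ k * (((N - j).factorial : ℝ) : ℂ) * ((n : ℂ) - 1)
    * ((rbinom ((L : ℝ) - 1 + (n : ℝ) / 2) (N - j) : ℝ) : ℂ)
    * ((rbinom ((n : ℝ) / 2 + j + L - N - 1) k : ℝ) : ℂ)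
    * ((rbinom ((N : ℝ) + (n : ℝ) / 2 - 1 / 2) N : ℝ) : ℂ)
    / ((((2 * N - L).factorial : ℝ) : ℂ)
        * (((L : ℝ) - N + (n : ℝ) / 2 - 1 / 2 : ℝ) : ℂ)
        * (((L - N - j - 1 - k).factorial : ℝ) : ℂ)
        * ((rbinom ((N : ℝ) - 1 / 2) N : ℝ) : ℂ))

/-- A falling product of length `k` as a quotient of Gamma values. -/
theorem prod_sub_eq_Gamma_div {x : ℝ} (k : ℕ) (hx : 0 < x - k + 1) :
    ∏ i ∈ range k, (x - i) = Real.Gamma (x + 1) / Real.Gamma (x - k + 1) := by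
  induction k with
  | zero =>
    have h : Real.Gamma (x + 1) ≠ 0 := (Real.Gamma_pos_of_pos (by simpa using hx)).ne'
    simp [h]
  | succ k ih =>
    push_cast at hx ⊢
    have hpos : 0 < x - k := by linarith
    rw [prod_range_succ, ih (by linarith), Real.Gamma_add_one hpos.ne',
      show x - ((k : ℝ) + 1) + 1 = x - k by ring]
    have h := (Real.Gamma_pos_of_pos hpos).ne'
    field_simp

/-- A rising product of length `k` as a quotient of Gamma values. -/
theorem prod_add_eq_Gamma_div {x : ℝ} (k : ℕ) (hx : 0 < x) :
    ∏ i ∈ range k, (x + i) = Real.Gamma (x + k) / Real.Gamma x := by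
  have h := prod_sub_eq_Gamma_div (x := x + k - 1) k (by linarith)
  rw [← prod_range_reflect] at h
  rw [show x + k - 1 + 1 = x + k by ring, show x + k - 1 - k + 1 = x by ring] at h
  rw [← h]
  refine prod_congr rfl fun i hi => ?_
  have hi := mem_range.1 hi
  rw [Nat.cast_sub (by omega), Nat.cast_sub (by omega)]
  push_cast
  ring

/-- The product of the differences of `k` to the other nodes among `0, …, M`. -/
theorem prod_erase_sub_eq_factorial {M k : ℕ} (hk : k ≤ M) :
    ∏ i ∈ (range (M + 1)).erase k, ((k : ℝ) - i)
      = (-1) ^ (M - k) * (k.factorial * (M - k).factorial) := by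
  obtain ⟨d, rfl⟩ := Nat.exists_eq_add_of_le hk
  have hset : (range (k + d + 1)).erase k
      = range k ∪ (range d).image (fun i => k + 1 + i) := by
    ext i
    simp only [mem_erase, mem_range, mem_union, mem_image]
    constructor
    · rintro ⟨h1, h2⟩
      rcases lt_or_ge i k with h | h
      · exact Or.inl h
      · exact Or.inr ⟨i - k - 1, by omega, by omega⟩
    · rintro (h | ⟨a, ha, rfl⟩) <;> omega
  have hdisj : Disjoint (range k) ((range d).image (fun i => k + 1 + i)) := by
    rw [disjoint_left]
    intro i hi
    simp only [mem_range, mem_image, not_exists, not_and] at hi ⊢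
    intro a _
    omega
  have hlow : ∏ i ∈ range k, ((k : ℝ) - i) = k.factorial := by
    rw [prod_sub_eq_Gamma_div k (by simp), Real.Gamma_nat_eq_factorial]
    simp
  have hhigh : ∏ i ∈ range d, ((k : ℝ) - ((k + 1 + i : ℕ) : ℝ)) = (-1) ^ d * d.factorial := by
    rw [← prod_range_add_one_eq_factorial, Nat.cast_prod]
    nth_rewrite 2 [← card_range d]
    rw [← prod_const, ← prod_mul_distrib]
    exact prod_congr rfl fun i _ => by push_cast; ring
  rw [hset, prod_union hdisj, prod_image (by intro a _ b _ h; simpa using h), hlow, hhigh,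
    Nat.add_sub_cancel_left]
  ring

/-- Partial-fraction sum of a rising factorial over the nodes `0, …, M`. -/
theorem sum_alternating_prod_div (M : ℕ) {a : ℝ} (b : ℝ) (ha : 0 < a) :
    ∑ k ∈ range (M + 1), (-1 : ℝ) ^ k * (∏ i ∈ range M, (b + k + i))
        / (k.factorial * (M - k).factorial * (a + k))
      = (∏ i ∈ range M, (b - a + i)) / ∏ i ∈ range (M + 1), (a + i) := by
  let p : Polynomial ℝ := ∏ i ∈ range M, (Polynomial.X + Polynomial.C (b + i))
  have hdeg : p.degree < (range (M + 1)).card := by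
    rw [Polynomial.degree_prod]
    simp only [Polynomial.degree_X_add_C, sum_const, card_range]
    simpa using (by exact_mod_cast Nat.lt_succ_self M : (M : WithBot ℕ) < (M + 1 : ℕ))
  have hp := Lagrange.eq_interpolate (v := fun i : ℕ => (i : ℝ))
    (fun x _ y _ h => Nat.cast_injective h) hdeg
  have hev := congrArg (Polynomial.eval (-a)) hp
  have hpos : ∀ i : ℕ, a + i ≠ 0 := fun i => by positivity
  have hD : ∏ i ∈ range (M + 1), (a + (i : ℝ)) ≠ 0 := prod_ne_zero_iff.2 fun i _ => hpos i
  rw [eq_div_iff hD, sum_mul]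
  have hleft : p.eval (-a) = ∏ i ∈ range M, (b - a + i) := by
    simp only [p, Polynomial.eval_prod]
    exact prod_congr rfl fun i _ => by simp; ring
  rw [← hleft, hev, Lagrange.interpolate_apply, Polynomial.eval_finsetSum]
  refine sum_congr rfl fun k hk => ?_
  have hkM : k ≤ M := Nat.lt_succ_iff.1 (mem_range.1 hk)
  have hval : p.eval (k : ℝ) = ∏ i ∈ range M, (b + k + i) := by
    simp only [p, Polynomial.eval_prod]
    exact prod_congr rfl fun i _ => by simp; ring
  have hbasis : (Lagrange.basis (range (M + 1)) (fun i : ℕ => (i : ℝ)) k).eval (-a)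
      = (∏ i ∈ (range (M + 1)).erase k, (-1 * (a + i)))
        / ∏ i ∈ (range (M + 1)).erase k, ((k : ℝ) - i) := by
    rw [Lagrange.basis, Polynomial.eval_prod, ← prod_div_distrib]
    refine prod_congr rfl fun i _ => ?_
    simp only [Lagrange.basisDivisor, Polynomial.eval_mul, Polynomial.eval_C,
      Polynomial.eval_sub, Polynomial.eval_X]
    rw [div_eq_inv_mul]
    ring
  rw [Polynomial.eval_mul, Polynomial.eval_C, hval, hbasis, prod_erase_sub_eq_factorial hkM,
    prod_mul_distrib, prod_const, card_erase_of_mem hk, card_range, Nat.add_sub_cancel,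
    ← mul_prod_erase _ _ hk]
  have hsign : (-1 : ℝ) ^ M = (-1) ^ (M - k) * (-1) ^ k := by
    rw [← pow_add, Nat.sub_add_cancel hkM]
  have h1 := hpos k
  rw [hsign]
  field_simp

theorem I_mul_I_zpow_neg_odd (j : ℕ) :
    Complex.I * Complex.I ^ (-(2 * (j : ℤ) + 1)) = ((-1 : ℝ) ^ j : ℝ) := by
  rw [neg_add, zpow_add₀ Complex.I_ne_zero, zpow_neg, zpow_mul, zpow_neg_one]
  have h : (Complex.I ^ (2 : ℤ)) = -1 := by
    rw [show (2 : ℤ) = ((2 : ℕ) : ℤ) by rfl, zpow_natCast, Complex.I_sq]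
  rw [h, zpow_natCast, ← inv_pow, mul_left_comm, mul_inv_cancel₀ Complex.I_ne_zero]
  norm_num

/-- The product of the factors of `cCoef` that do not depend on `L` or `k`. -/
theorem constant_factor_eq (n N j : ℕ) (hn : 2 ≤ n) :
    Complex.I * ((cConst n : ℝ) : ℂ) * gammaConst n j * ((n : ℂ) - 1)
        * ((rbinom ((N : ℝ) + (n : ℝ) / 2 - 1 / 2) N : ℝ) : ℂ)
        / ((rbinom ((N : ℝ) - 1 / 2) N : ℝ) : ℂ)
      = (((-1) ^ j * Real.Gamma (j + 1 / 2) * Real.Gamma (N + n / 2 + 1 / 2)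
          / (Real.Gamma (n / 2 + j + 1 / 2) * Real.Gamma (N + 1 / 2)) : ℝ) : ℂ) := by
  have hn' : (2 : ℝ) ≤ n := by exact_mod_cast hn
  have hI := I_mul_I_zpow_neg_odd j
  have hΓ : Real.Gamma ((n : ℝ) / 2 + 1 / 2)
      = ((n : ℝ) - 1) / 2 * Real.Gamma (((n : ℝ) - 1) / 2) := by
    rw [← Real.Gamma_add_one (by linarith)]
    congr 1
    ring
  have hnum : rbinom ((N : ℝ) + (n : ℝ) / 2 - 1 / 2) N
      = Real.Gamma (N + n / 2 + 1 / 2)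
        / (((n : ℝ) - 1) / 2 * Real.Gamma (((n : ℝ) - 1) / 2)) / N.factorial := by
    rw [rbinom, prod_sub_eq_Gamma_div N (by linarith), ← hΓ]
    congr 3 <;> ring
  have hden : rbinom ((N : ℝ) - 1 / 2) N
      = Real.Gamma (N + 1 / 2) / Real.Gamma (1 / 2) / N.factorial := by
    rw [rbinom, prod_sub_eq_Gamma_div N (by linarith)]
    congr 3 <;> ring
  have hreal : cConst n * (Real.pi ^ ((n : ℝ) / 2) * Real.Gamma (j + 1 / 2)
        / Real.Gamma (n / 2 + j + 1 / 2)) * ((n : ℝ) - 1)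
        * rbinom ((N : ℝ) + (n : ℝ) / 2 - 1 / 2) N / rbinom ((N : ℝ) - 1 / 2) N
      = Real.Gamma (j + 1 / 2) * Real.Gamma (N + n / 2 + 1 / 2)
          / (Real.Gamma (n / 2 + j + 1 / 2) * Real.Gamma (N + 1 / 2)) := by
    rw [hnum, hden, cConst]
    have h1 : (n : ℝ) - 1 ≠ 0 := by linarith
    have h2 := (Real.Gamma_pos_of_pos (show 0 < ((n : ℝ) - 1) / 2 by linarith)).ne'
    have h3 := (Real.Gamma_pos_of_pos (show (0 : ℝ) < 1 / 2 by norm_num)).ne'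
    have h4 := (Real.Gamma_pos_of_pos (show (0 : ℝ) < N + 1 / 2 by positivity)).ne'
    have h5 := (Real.Gamma_pos_of_pos (show (0 : ℝ) < n / 2 + j + 1 / 2 by positivity)).ne'
    have h6 := (Real.rpow_pos_of_pos Real.pi_pos ((n : ℝ) / 2)).ne'
    have h7 : (N.factorial : ℝ) ≠ 0 := by positivity
    generalize Real.Gamma (((n : ℝ) - 1) / 2) = G at *
    generalize Real.Gamma (1 / 2) = H at *
    field_simp
  rw [mul_assoc ((-1 : ℝ) ^ j), mul_div_assoc ((-1 : ℝ) ^ j), ← hreal, gammaConst]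
  push_cast at hI ⊢
  rw [← hI]
  ring

/-- The summand of index `L = N + 1 + j + k`. -/
theorem summand_eq (n N j k M : ℕ) (hn : 2 ≤ n) (hM : N = j + 1 + M) :
    cCoef n N (N + 1 + j + k) j k
        / ((((2 : ℝ) ^ ((n : ℝ) / 2 + (N + 1 + j + k : ℕ) - N + j)
            * Real.Gamma ((n : ℝ) / 2 + (N + 1 + j + k : ℕ) - N + j + 1) : ℝ)) : ℂ)
      = (((-1) ^ j * Real.Gamma (j + 1 / 2) * Real.Gamma (N + n / 2 + 1 / 2)
            / (Real.Gamma (n / 2 + j + 1 / 2) * Real.Gamma (N + 1 / 2))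
          / (2 ^ ((n : ℝ) / 2) * 2 * 4 ^ j * Real.Gamma (n / 2 + 2 * j + 1))
          * ((-1) ^ k * (∏ i ∈ range M, ((n : ℝ) / 2 + 2 * j + 2 + k + i))
            / (k.factorial * (M - k).factorial * ((n : ℝ) / 2 + j + 1 / 2 + k))) : ℝ) : ℂ) := by
  have hNM : (N : ℝ) = j + 1 + M := by rw [hM]; push_cast; ring
  have hpow : (2 : ℝ) ^ ((n : ℝ) / 2 + (N + 1 + j + k : ℕ) - N + j)
      = 2 ^ ((n : ℝ) / 2) * 2 * 4 ^ j * 2 ^ k := by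
    rw [show (n : ℝ) / 2 + (N + 1 + j + k : ℕ) - N + j
        = (n : ℝ) / 2 + ((1 + 2 * j + k : ℕ) : ℝ) by push_cast; ring,
      Real.rpow_add (by norm_num), Real.rpow_natCast, pow_add, pow_add, pow_mul]
    norm_num
    ring
  have hb1 : ((N - j).factorial : ℝ)
        * rbinom (((N + 1 + j + k : ℕ) : ℝ) - 1 + (n : ℝ) / 2) (N - j)
      = Real.Gamma (n / 2 + 2 * j + 2 + k + M) / Real.Gamma (n / 2 + 2 * j + k + 1) := by
    have hsub : N - j = M + 1 := by omega
    rw [rbinom, mul_div_cancel₀ _ (by positivity), hsub, prod_sub_eq_Gamma_div]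
    · congr 2 <;> push_cast <;> rw [hNM] <;> ring
    · push_cast
      rw [hNM]
      ring_nf
      positivity
  have hb2 : rbinom ((n : ℝ) / 2 + j + (N + 1 + j + k : ℕ) - N - 1) k
      = Real.Gamma (n / 2 + 2 * j + k + 1) / Real.Gamma (n / 2 + 2 * j + 1) / k.factorial := by
    rw [rbinom, prod_sub_eq_Gamma_div]
    · congr 3 <;> push_cast <;> ring
    · push_cast
      ring_nf
      positivity
  have hfac : 2 * N - (N + 1 + j + k) = M - k := by omega
  have hone : N + 1 + j + k - N - j - 1 - k = 0 := by omega
  have hlin : ((N + 1 + j + k : ℕ) : ℝ) - N + (n : ℝ) / 2 - 1 / 2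
      = (n : ℝ) / 2 + j + 1 / 2 + k := by push_cast; ring
  have hGarg : (n : ℝ) / 2 + (N + 1 + j + k : ℕ) - N + j + 1 = n / 2 + 2 * j + 2 + k := by
    push_cast; ring
  have hsplit : cCoef n N (N + 1 + j + k) j k
      = Complex.I * ((cConst n : ℝ) : ℂ) * gammaConst n j * ((n : ℂ) - 1)
          * ((rbinom ((N : ℝ) + (n : ℝ) / 2 - 1 / 2) N : ℝ) : ℂ)
          / ((rbinom ((N : ℝ) - 1 / 2) N : ℝ) : ℂ)
        * (((-1) ^ k * 2 ^ k * (((N - j).factorial : ℝ)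
            * rbinom (((N + 1 + j + k : ℕ) : ℝ) - 1 + (n : ℝ) / 2) (N - j))
          * rbinom ((n : ℝ) / 2 + j + (N + 1 + j + k : ℕ) - N - 1) k
          / ((M - k).factorial * ((n : ℝ) / 2 + j + 1 / 2 + k)) : ℝ) : ℂ) := by
    rw [cCoef, hfac, hone, hlin]
    simp only [Complex.ofReal_mul, Complex.ofReal_div, Complex.ofReal_pow, Complex.ofReal_neg,
      Complex.ofReal_one, Complex.ofReal_ofNat, Nat.factorial_zero, Nat.cast_one]
    ring
  rw [hsplit, constant_factor_eq n N j hn, ← Complex.ofReal_mul, ← Complex.ofReal_div,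
    hpow, hb1, hb2, hGarg, prod_add_eq_Gamma_div M (by positivity)]
  congr 1
  have h1 := (Real.Gamma_pos_of_pos (show (0 : ℝ) < n / 2 + 2 * j + k + 1 by positivity)).ne'
  generalize Real.Gamma (n / 2 + 2 * j + k + 1) = G at *
  field_simp

theorem stmt8 (n N j : ℕ) (hn : 2 ≤ n) (hN : 1 ≤ N) (hj : j + 1 ≤ N) :
    ∑ L ∈ Finset.Icc (N + 1 + j) (2 * N),
        cCoef n N L j (L - N - j - 1)
          / ((((2 : ℝ) ^ ((n : ℝ) / 2 + L - N + j)
                * Real.Gamma ((n : ℝ) / 2 + L - N + j + 1) : ℝ)) : ℂ)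
      = ((1 / (2 : ℝ) ^ ((n : ℝ) / 2) : ℝ) : ℂ)
          * ((-1 : ℂ) ^ j / ((4 : ℂ) ^ j * (2 * (j : ℂ) + 1)
              * ((Real.Gamma ((n : ℝ) / 2 + 2 * j + 1) : ℝ) : ℂ))) := by
  obtain ⟨M, hM⟩ : ∃ M, N = j + 1 + M := Nat.exists_eq_add_of_le (by omega)
  have hIcc : Icc (N + 1 + j) (2 * N) = Ico (N + 1 + j) (2 * N + 1) := by
    ext i
    simp only [mem_Icc, mem_Ico]
    omega
  rw [hIcc, sum_Ico_eq_sum_range, show 2 * N + 1 - (N + 1 + j) = M + 1 by omega]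
  have hterm : ∀ k ∈ range (M + 1), _ = _ := fun k _ => summand_eq n N j k M hn hM
  have hk : ∀ k, N + 1 + j + k - N - j - 1 = k := fun k => by omega
  simp only [hk]
  rw [sum_congr rfl hterm, ← Complex.ofReal_sum, ← mul_sum,
    sum_alternating_prod_div M (a := (n : ℝ) / 2 + j + 1 / 2) _ (by positivity),
    prod_add_eq_Gamma_div (M + 1) (by positivity),
    show (n : ℝ) / 2 + 2 * j + 2 - (n / 2 + j + 1 / 2) = j + 1 / 2 + 1 by ring,
    prod_add_eq_Gamma_div M (by positivity),
    Real.Gamma_add_one (s := (j : ℝ) + 1 / 2) (by positivity),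
    show (j : ℝ) + 1 / 2 + 1 + M = N + 1 / 2 by rw [hM]; push_cast; ring,
    show (n : ℝ) / 2 + j + 1 / 2 + (M + 1 : ℕ) = N + n / 2 + 1 / 2 by rw [hM]; push_cast; ring]
  have h1 := (Real.Gamma_pos_of_pos (show (0 : ℝ) < j + 1 / 2 by positivity)).ne'
  have h2 := (Real.Gamma_pos_of_pos (show (0 : ℝ) < N + 1 / 2 by positivity)).ne'
  have h3 := (Real.Gamma_pos_of_pos (show (0 : ℝ) < N + n / 2 + 1 / 2 by positivity)).ne'
  have h4 := (Real.Gamma_pos_of_pos (show (0 : ℝ) < n / 2 + j + 1 / 2 by positivity)).ne'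
  have h5 := (Real.Gamma_pos_of_pos (show (0 : ℝ) < n / 2 + 2 * j + 1 by positivity)).ne'
  have h6 : (2 : ℝ) * j + 1 ≠ 0 := by positivity
  have h7 : (j : ℝ) + 1 / 2 = (2 * j + 1) / 2 := by ring
  trans ((1 / (2 : ℝ) ^ ((n : ℝ) / 2) * ((-1) ^ j / (4 ^ j * (2 * (j : ℝ) + 1)
      * Real.Gamma (n / 2 + 2 * j + 1))) : ℝ) : ℂ)
  · congr 1
    generalize Real.Gamma (j + 1 / 2) = A at *
    generalize Real.Gamma (N + 1 / 2) = B at *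
    generalize Real.Gamma (N + n / 2 + 1 / 2) = C at *
    generalize Real.Gamma (n / 2 + j + 1 / 2) = D at *
    generalize Real.Gamma (n / 2 + 2 * j + 1) = E at *
    rw [h7]
    field_simp
  · push_cast
    ring
end

section
/- Let n ≥ 1 and let j ∈ {1, …, n}. There is a constant C > 0, depending only on n, such that for every measurable function a : ℝ^n → ℝ satisfying |a(y)| ≤ 1 for almost every y, a(y) = 0 for |y| > 1, and ∫_{ℝ^n} a(y) dy = 0, and for every x ∈ ℝ^n with |x| > 2, one has | ∫_{{y : |y| ≤ 1}} ( (x_j − y_j) / |x−y|^{n+1} ) a(y) dy | ≤ C / |x|^{n+1}. -/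
open MeasureTheory

/-- First-order decay of the increments of the kernel `x ↦ x j / ‖x‖ ^ (n + 1)`. -/
theorem abs_riesz_kernel_sub_le {ι : Type*} [Fintype ι] (n : ℕ) (j : ι)
    {x y : EuclideanSpace ℝ ι} (hx : 2 < ‖x‖) (hy : ‖y‖ ≤ 1) :
    |(x j - y j) / ‖x - y‖ ^ (n + 1) - x j / ‖x‖ ^ (n + 1)|
      ≤ (n + 2) * 2 ^ (n + 1) / ‖x‖ ^ (n + 1) := by
  have hxj : |x j| ≤ ‖x‖ := PiLp.norm_apply_le x j
  have hyj : |y j| ≤ 1 := (PiLp.norm_apply_le y j).trans hy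
  have hdiff : |‖x - y‖ - ‖x‖| ≤ 1 := by
    have h := abs_norm_sub_norm_le (x - y) x
    rw [sub_sub_cancel_left, norm_neg] at h
    exact h.trans hy
  generalize ‖x - y‖ = s at *
  generalize ‖x‖ = r at *
  have hr : 0 < r := by linarith
  have hsr : r / 2 ≤ s := by linarith [(abs_le.1 hdiff).1]
  have hs : 0 < s := by linarith
  have hinv : s⁻¹ ≤ 2 / r := by
    rw [← inv_div]
    exact inv_anti₀ (by positivity) hsr
  have hinv' : r⁻¹ ≤ 2 / r := by
    rw [inv_eq_one_div]
    gcongr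
    norm_num
  have hsub : |s⁻¹ - r⁻¹| ≤ 2 / r * r⁻¹ := by
    rw [inv_sub_inv hs.ne' hr.ne', abs_div, abs_sub_comm, abs_of_pos (mul_pos hs hr),
      div_eq_mul_inv, mul_inv]
    calc |s - r| * (s⁻¹ * r⁻¹) ≤ 1 * (2 / r * r⁻¹) := by gcongr
      _ = 2 / r * r⁻¹ := one_mul _
  have hpow : |s⁻¹ ^ (n + 1) - r⁻¹ ^ (n + 1)|
      ≤ 2 / r * r⁻¹ * (n + 1 : ℕ) * (2 / r) ^ n := by
    refine (abs_pow_sub_pow_le _ _ _).trans ?_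
    rw [Nat.add_sub_cancel, abs_of_pos (inv_pos.2 hs), abs_of_pos (inv_pos.2 hr)]
    gcongr
    exact max_le hinv hinv'
  calc |(x j - y j) / s ^ (n + 1) - x j / r ^ (n + 1)|
      = |x j * (s⁻¹ ^ (n + 1) - r⁻¹ ^ (n + 1)) - y j * s⁻¹ ^ (n + 1)| := by
        congr 1
        simp only [inv_pow]
        ring
    _ ≤ |x j| * |s⁻¹ ^ (n + 1) - r⁻¹ ^ (n + 1)| + |y j| * s⁻¹ ^ (n + 1) := by
        refine (abs_sub _ _).trans_eq ?_
        rw [abs_mul, abs_mul, abs_of_pos (pow_pos (inv_pos.2 hs) (n + 1))]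
    _ ≤ r * (2 / r * r⁻¹ * (n + 1 : ℕ) * (2 / r) ^ n) + 1 * (2 / r) ^ (n + 1) := by
        gcongr
    _ = (n + 2) * 2 ^ (n + 1) / r ^ (n + 1) := by
        push_cast
        simp only [div_pow]
        field_simp
        ring

theorem stmt11 (n : ℕ) (hn : 1 ≤ n) (j : Fin n) :
    ∃ C : ℝ, 0 < C ∧
      ∀ a : EuclideanSpace ℝ (Fin n) → ℝ, Measurable a →
        (∀ᵐ y : EuclideanSpace ℝ (Fin n), |a y| ≤ 1) →
        (∀ y : EuclideanSpace ℝ (Fin n), 1 < ‖y‖ → a y = 0) →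
        (∫ y : EuclideanSpace ℝ (Fin n), a y) = 0 →
        ∀ x : EuclideanSpace ℝ (Fin n), 2 < ‖x‖ →
          |∫ y in {y : EuclideanSpace ℝ (Fin n) | ‖y‖ ≤ 1},
              (x j - y j) / ‖x - y‖ ^ (n + 1) * a y|
            ≤ C / ‖x‖ ^ (n + 1) := by
  set B : Set (EuclideanSpace ℝ (Fin n)) := {y | ‖y‖ ≤ 1} with hB
  have hBball : B = Metric.closedBall 0 1 := by
    ext y
    simp [hB]
  have hBmeas : MeasurableSet B := hBball ▸ measurableSet_closedBall
  have hBfin : volume B < ⊤ := hBball ▸ measure_closedBall_lt_top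
  refine ⟨(n + 2) * 2 ^ (n + 1) * (volume.real B + 1), by positivity, ?_⟩
  intro a ha ha1 ha0 haint x hx
  set M : ℝ := (n + 2) * 2 ^ (n + 1) / ‖x‖ ^ (n + 1) with hM
  have hM0 : 0 ≤ M := by positivity
  have hbound : ∀ᵐ y ∂volume.restrict B,
      ‖((x j - y j) / ‖x - y‖ ^ (n + 1) - x j / ‖x‖ ^ (n + 1)) * a y‖ ≤ M := by
    filter_upwards [ae_restrict_of_ae ha1, ae_restrict_mem hBmeas] with y hay hy
    rw [norm_mul, ← mul_one M]
    exact mul_le_mul (abs_riesz_kernel_sub_le n j hx hy) hay (norm_nonneg _) hM0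
  have hint : IntegrableOn
      (fun y => ((x j - y j) / ‖x - y‖ ^ (n + 1) - x j / ‖x‖ ^ (n + 1)) * a y) B :=
    Measure.integrableOn_of_bounded hBfin.ne
      (by
        have : Measurable fun y : EuclideanSpace ℝ (Fin n) => y j := by fun_prop
        exact Measurable.aestronglyMeasurable (by fun_prop)) hbound
  have hinta : IntegrableOn a B :=
    Measure.integrableOn_of_bounded hBfin.ne ha.aestronglyMeasurable (ae_restrict_of_ae ha1)
  have hmean : ∫ y in B, a y = 0 := by
    rw [setIntegral_eq_integral_of_forall_compl_eq_zero, haint]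
    exact fun y hy => ha0 y (not_le.1 hy)
  have heq : ∫ y in B, (x j - y j) / ‖x - y‖ ^ (n + 1) * a y
      = ∫ y in B, ((x j - y j) / ‖x - y‖ ^ (n + 1) - x j / ‖x‖ ^ (n + 1)) * a y := by
    have hadd := integral_add hint (hinta.const_mul (x j / ‖x‖ ^ (n + 1)))
    rw [integral_const_mul, hmean, mul_zero, add_zero] at hadd
    rw [← hadd]
    congr 1 with y
    ring
  rw [heq]
  calc |∫ y in B, ((x j - y j) / ‖x - y‖ ^ (n + 1) - x j / ‖x‖ ^ (n + 1)) * a y|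
      ≤ M * volume.real B := norm_setIntegral_le_of_norm_le_const_ae hBfin hbound
    _ ≤ M * (volume.real B + 1) := by
        gcongr
        linarith
    _ = (n + 2) * 2 ^ (n + 1) * (volume.real B + 1) / ‖x‖ ^ (n + 1) := by
        rw [hM]
        ring
end

section
/- Let n ≥ 1 and let j ∈ {1, …, n}. There is a constant C > 0, depending only on n, such that for every x ∈ ℝ^n with |x| > 2 the limit L(x) := lim_{ε→0⁺} ∫_{{y : ε < |y| < 1}} ( (x_j − y_j) / |x−y|^{n+1} ) · ( y_j / |y|^{n+1} ) dy exists and satisfies |L(x)| ≤ C / |x|^{n+1}. -/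
open MeasureTheory Filter

/-- The `j`-th Riesz kernel `z ↦ z_j / |z|^(n+1)`, up to normalization. -/
noncomputable def rieszKernel {n : ℕ} (j : Fin n) (z : EuclideanSpace ℝ (Fin n)) : ℝ :=
  z j / ‖z‖ ^ (n + 1)

section RieszKernel

variable {n : ℕ} (j : Fin n)

lemma measurable_rieszKernel : Measurable (rieszKernel j) := by
  unfold rieszKernel
  fun_prop

lemma rieszKernel_neg (z : EuclideanSpace ℝ (Fin n)) :
    rieszKernel j (-z) = -rieszKernel j z := by
  simp [rieszKernel, neg_div]

lemma abs_coord_le_norm (z : EuclideanSpace ℝ (Fin n)) : |z j| ≤ ‖z‖ := by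
  simpa using PiLp.norm_apply_le z j

lemma abs_rieszKernel_le (z : EuclideanSpace ℝ (Fin n)) :
    |rieszKernel j z| ≤ ‖z‖ / ‖z‖ ^ (n + 1) := by
  rw [rieszKernel, abs_div, abs_of_nonneg (by positivity : 0 ≤ ‖z‖ ^ (n + 1))]
  gcongr
  exact abs_coord_le_norm j z

/-- The Lipschitz constant in the smoothness estimate for the Riesz kernel. -/
noncomputable def rieszSmoothnessConst (n : ℕ) : ℝ :=
  2 ^ (n + 1) + (n + 1) * (3 / 2) ^ n * 2 ^ (n + 1)

lemma rieszSmoothnessConst_pos (n : ℕ) : 0 < rieszSmoothnessConst n := by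
  unfold rieszSmoothnessConst
  positivity

lemma abs_rieszKernel_sub_le {x y : EuclideanSpace ℝ (Fin n)} (hx : 0 < ‖x‖)
    (hy : ‖y‖ ≤ ‖x‖ / 2) :
    |rieszKernel j (x - y) - rieszKernel j x| ≤
      rieszSmoothnessConst n / ‖x‖ ^ (n + 1) * ‖y‖ := by
  have h₁ : |‖x‖ - ‖x - y‖| ≤ ‖y‖ := by
    simpa using abs_norm_sub_norm_le x (x - y)
  have hlow : ‖x‖ / 2 ≤ ‖x - y‖ := by linarith [abs_le.1 h₁]
  have hup : ‖x - y‖ ≤ 3 / 2 * ‖x‖ := by linarith [abs_le.1 h₁]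
  have hxj := abs_coord_le_norm j x
  have hyj := abs_coord_le_norm j y
  unfold rieszKernel
  rw [PiLp.sub_apply]
  generalize ‖x - y‖ = a at *
  generalize ‖x‖ = b at *
  have ha : 0 < a := by linarith
  have hpow : |b ^ (n + 1) - a ^ (n + 1)| ≤ ‖y‖ * (n + 1) * (3 / 2 * b) ^ n := by
    refine (abs_pow_sub_pow_le b a (n + 1)).trans ?_
    rw [Nat.add_sub_cancel, abs_of_pos hx, abs_of_pos ha]
    push_cast
    gcongr
    exact max_le (by linarith) hup
  have hinv : 1 / a ^ (n + 1) ≤ 2 ^ (n + 1) / b ^ (n + 1) := by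
    rw [div_le_div_iff₀ (by positivity) (by positivity), one_mul, ← mul_pow]
    gcongr
    linarith
  have hsplit : (x j - y j) / a ^ (n + 1) - x j / b ^ (n + 1) =
      (x j * (b ^ (n + 1) - a ^ (n + 1)) / b ^ (n + 1) - y j) * (1 / a ^ (n + 1)) := by
    field_simp
    ring
  rw [hsplit, abs_mul, abs_of_pos (by positivity : 0 < 1 / a ^ (n + 1))]
  have hnum : |x j * (b ^ (n + 1) - a ^ (n + 1)) / b ^ (n + 1) - y j| ≤
      b * (‖y‖ * (n + 1) * (3 / 2 * b) ^ n) / b ^ (n + 1) + ‖y‖ := by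
    refine (abs_sub _ _).trans ?_
    rw [abs_div, abs_mul, abs_of_pos (by positivity : 0 < b ^ (n + 1))]
    gcongr
  calc _ ≤ (b * (‖y‖ * (n + 1) * (3 / 2 * b) ^ n) / b ^ (n + 1) + ‖y‖) *
        (2 ^ (n + 1) / b ^ (n + 1)) := by gcongr
    _ = _ := by
      unfold rieszSmoothnessConst
      rw [mul_pow, pow_succ b n]
      field_simp
      ring

lemma integrableOn_ball_norm_mul_norm_div_norm_pow (hn : 1 ≤ n) :
    IntegrableOn (fun y : EuclideanSpace ℝ (Fin n) => ‖y‖ * (‖y‖ / ‖y‖ ^ (n + 1)))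
      (Metric.ball 0 1) := by
  have : Nonempty (Fin n) := ⟨⟨0, hn⟩⟩
  rw [integrableOn_fun_norm_addHaar volume (f := fun r : ℝ => r * (r / r ^ (n + 1)))]
  refine (integrableOn_const (C := (1 : ℝ)) (by simp)).congr_fun ?_ measurableSet_Ioo
  intro r hr
  have hr0 : r ≠ 0 := hr.1.ne'
  obtain ⟨m, rfl⟩ := Nat.exists_eq_add_of_le' hn
  simp only [finrank_euclideanSpace, Fintype.card_fin, Nat.add_sub_cancel, smul_eq_mul]
  field_simp
  ring

lemma measurableSet_annulus (ε : ℝ) :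
    MeasurableSet {y : EuclideanSpace ℝ (Fin n) | ε < ‖y‖ ∧ ‖y‖ < 1} :=
  (measurableSet_lt measurable_const measurable_norm).inter
    (measurableSet_lt measurable_norm measurable_const)

lemma annulus_subset_ball (ε : ℝ) :
    {y : EuclideanSpace ℝ (Fin n) | ε < ‖y‖ ∧ ‖y‖ < 1} ⊆ Metric.ball 0 1 :=
  fun y hy => by simpa using hy.2

lemma integrableOn_annulus_rieszKernel {ε : ℝ} (hε : 0 < ε) :
    IntegrableOn (rieszKernel j) {y : EuclideanSpace ℝ (Fin n) | ε < ‖y‖ ∧ ‖y‖ < 1} := by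
  refine Measure.integrableOn_of_bounded (M := 1 / ε ^ (n + 1))
    ((measure_mono (annulus_subset_ball ε)).trans_lt measure_ball_lt_top).ne
    (measurable_rieszKernel j).aestronglyMeasurable ?_
  filter_upwards [ae_restrict_mem (measurableSet_annulus ε)] with y hy
  refine (abs_rieszKernel_le j y).trans ?_
  gcongr
  exacts [hy.2.le, hy.1.le]

lemma setIntegral_annulus_rieszKernel (ε : ℝ) :
    ∫ y in {y : EuclideanSpace ℝ (Fin n) | ε < ‖y‖ ∧ ‖y‖ < 1}, rieszKernel j y = 0 := by
  rw [← integral_indicator (measurableSet_annulus ε)]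
  set g := Set.indicator {y : EuclideanSpace ℝ (Fin n) | ε < ‖y‖ ∧ ‖y‖ < 1} (rieszKernel j)
  have hodd : ∀ y, g (-y) = -g y := fun y => by
    simp only [g, Set.indicator, Set.mem_ofPred_eq, norm_neg, rieszKernel_neg]
    split_ifs <;> simp
  have h := integral_neg_eq_self g volume
  simp only [hodd, integral_neg] at h
  linarith

end RieszKernel

theorem stmt12 (n : ℕ) (hn : 1 ≤ n) (j : Fin n) :
    ∃ C : ℝ, 0 < C ∧
      ∀ x : EuclideanSpace ℝ (Fin n), 2 < ‖x‖ →
        ∃ L : ℝ,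
          Tendsto (fun ε : ℝ =>
              ∫ y in {y : EuclideanSpace ℝ (Fin n) | ε < ‖y‖ ∧ ‖y‖ < 1},
                (x j - y j) / ‖x - y‖ ^ (n + 1) * (y j / ‖y‖ ^ (n + 1)))
            (nhdsWithin 0 (Set.Ioi 0)) (nhds L)
          ∧ |L| ≤ C / ‖x‖ ^ (n + 1) := by
  set w : EuclideanSpace ℝ (Fin n) → ℝ := fun y => ‖y‖ * (‖y‖ / ‖y‖ ^ (n + 1)) with hw
  have hwint : IntegrableOn w (Metric.ball 0 1) :=
    integrableOn_ball_norm_mul_norm_div_norm_pow hn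
  have hI : 0 ≤ ∫ y in Metric.ball 0 1, w y := integral_nonneg fun y => by positivity
  refine ⟨rieszSmoothnessConst n * (∫ y in Metric.ball 0 1, w y) + 1,
    by have := rieszSmoothnessConst_pos n; positivity, fun x hx => ?_⟩
  set G : EuclideanSpace ℝ (Fin n) → ℝ := fun y =>
    (rieszKernel j (x - y) - rieszKernel j x) * rieszKernel j y with hG
  have hGmeas : Measurable G := by
    have := measurable_rieszKernel j
    fun_prop
  have hGle : ∀ y ∈ Metric.ball (0 : EuclideanSpace ℝ (Fin n)) 1,
      ‖G y‖ ≤ rieszSmoothnessConst n / ‖x‖ ^ (n + 1) * w y := fun y hy => by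
    have hy1 : ‖y‖ < 1 := by simpa using hy
    rw [hG, hw, norm_mul, ← mul_assoc]
    have hc := rieszSmoothnessConst_pos n
    exact mul_le_mul (abs_rieszKernel_sub_le j (by linarith) (by linarith))
      (abs_rieszKernel_le j y) (abs_nonneg _) (by positivity)
  have hbound : IntegrableOn (fun y => rieszSmoothnessConst n / ‖x‖ ^ (n + 1) * w y)
      (Metric.ball 0 1) := hwint.const_mul _
  have hGint : IntegrableOn G (Metric.ball 0 1) :=
    hbound.mono' hGmeas.aestronglyMeasurable
      ((ae_restrict_mem measurableSet_ball).mono hGle)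
  refine ⟨∫ y in Metric.ball 0 1, G y, ?_, ?_⟩
  · have hcancel : ∀ ε ∈ Set.Ioi (0 : ℝ),
        ∫ y in Metric.ball 0 1, Set.indicator {y | ε < ‖y‖ ∧ ‖y‖ < 1} G y =
        ∫ y in {y : EuclideanSpace ℝ (Fin n) | ε < ‖y‖ ∧ ‖y‖ < 1},
          (x j - y j) / ‖x - y‖ ^ (n + 1) * (y j / ‖y‖ ^ (n + 1)) := fun ε hε => by
      rw [setIntegral_indicator (measurableSet_annulus ε),
        Set.inter_eq_right.2 (annulus_subset_ball ε)]
      have hadd := integral_add (hGint.mono_set (annulus_subset_ball ε))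
        ((integrableOn_annulus_rieszKernel j hε).const_mul (rieszKernel j x))
      rw [integral_const_mul, setIntegral_annulus_rieszKernel, mul_zero, add_zero] at hadd
      rw [← hadd]
      congr 1 with y
      simp only [hG, rieszKernel, PiLp.sub_apply]
      ring
    refine Tendsto.congr' (eventually_nhdsWithin_of_forall hcancel) ?_
    refine tendsto_integral_filter_of_dominated_convergence _
      (.of_forall fun ε => (hGmeas.indicator (measurableSet_annulus ε)).aestronglyMeasurable)
      (.of_forall fun ε => (ae_restrict_mem measurableSet_ball).mono fun y hy =>
        (norm_indicator_le_norm_self _ _).trans (hGle y hy)) hbound ?_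
    filter_upwards [ae_restrict_mem measurableSet_ball] with y hy
    have hy1 : ‖y‖ < 1 := by simpa using hy
    rcases eq_or_ne y 0 with rfl | hy0
    · have hG0 : G 0 = 0 := by simp [hG, rieszKernel]
      simp [Set.indicator, hG0]
    · refine tendsto_const_nhds.congr' ?_
      filter_upwards [nhdsWithin_le_nhds (Iio_mem_nhds (norm_pos_iff.2 hy0))] with ε hε
      rw [Set.indicator_of_mem (show y ∈ {y | ε < ‖y‖ ∧ ‖y‖ < 1} from ⟨hε, hy1⟩)]
  · calc |∫ y in Metric.ball 0 1, G y|
        ≤ ∫ y in Metric.ball 0 1, rieszSmoothnessConst n / ‖x‖ ^ (n + 1) * w y :=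
          norm_integral_le_of_norm_le hbound ((ae_restrict_mem measurableSet_ball).mono hGle)
      _ = rieszSmoothnessConst n * (∫ y in Metric.ball 0 1, w y) / ‖x‖ ^ (n + 1) := by
          rw [integral_const_mul]
          ring
      _ ≤ _ := by
          gcongr
          linarith
end

section
/- Let g : ℝ → ℝ be defined by g(y) = log( |y| / |y−1| ) for y ∉ {0,1} and g(0) = g(1) = 0. There exist constants m > e and c > 0 such that for every x > m, sup_{ε>0} | ∫_{{y : |y−x| > ε}} g(y) / (y−x) dy | ≥ c · (log x) / x. (For each such x and each ε > 0 the function y ↦ g(y)/(y−x) is Lebesgue integrable on {y : |y−x| > ε}.) -/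
open MeasureTheory

/-- `g(y) = log(|y|/|y−1|)`; with Mathlib's conventions (`x/0 = 0`, `Real.log 0 = 0`)
this function takes the value `0` at `y = 0` and `y = 1`. -/
noncomputable def gfun (y : ℝ) : ℝ := Real.log (|y| / |y - 1|)

theorem gfun_eq_log_sub_log (y : ℝ) : gfun y = Real.log y - Real.log (y - 1) := by
  unfold gfun
  rcases eq_or_ne y 0 with rfl | h0
  · simp
  rcases eq_or_ne y 1 with rfl | h1
  · simp
  rw [Real.log_div (abs_ne_zero.2 h0) (abs_ne_zero.2 (sub_ne_zero.2 h1)), Real.log_abs,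
    Real.log_abs]

theorem measurable_gfun : Measurable gfun := by
  unfold gfun
  fun_prop

theorem intervalIntegrable_gfun (a b : ℝ) : IntervalIntegrable gfun volume a b := by
  rw [funext gfun_eq_log_sub_log]
  refine intervalIntegral.intervalIntegrable_log'.sub ?_
  simpa using (intervalIntegral.intervalIntegrable_log' (a := a - 1) (b := b - 1)).comp_sub_right 1

theorem gfun_nonneg_of_one_lt {y : ℝ} (hy : 1 < y) : 0 ≤ gfun y := by
  rw [gfun_eq_log_sub_log, sub_nonneg]
  exact Real.log_le_log (by linarith) (by linarith)

theorem gfun_le_of_two_le {y : ℝ} (hy : 2 ≤ y) : gfun y ≤ 2 / y := by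
  have h := Real.log_le_sub_one_of_pos (x := y / (y - 1)) (div_pos (by linarith) (by linarith))
  rw [gfun_eq_log_sub_log, ← Real.log_div (by linarith) (by linarith)]
  refine h.trans ?_
  rw [div_sub_one (by linarith), div_le_div_iff₀ (by linarith) (by linarith)]
  linarith

/-- The reflection `y ↦ 1 - y` swaps the two singularities of `gfun`. -/
theorem gfun_one_sub (y : ℝ) : gfun (1 - y) = -gfun y := by
  rw [gfun_eq_log_sub_log, gfun_eq_log_sub_log, ← Real.log_neg_eq_log (1 - y),
    ← Real.log_neg_eq_log (1 - y - 1)]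
  ring_nf

theorem abs_gfun_le {y : ℝ} (hy : 2 ≤ |y|) : |gfun y| ≤ 2 / |y| := by
  rcases le_abs.1 hy with h | h
  · rw [abs_of_nonneg (gfun_nonneg_of_one_lt (by linarith)), abs_of_nonneg (by linarith : 0 ≤ y)]
    exact gfun_le_of_two_le h
  · have h0 := gfun_nonneg_of_one_lt (y := 1 - y) (by linarith)
    rw [← abs_neg, ← gfun_one_sub, abs_of_nonneg h0, abs_of_neg (by linarith : y < 0)]
    refine (gfun_le_of_two_le (by linarith)).trans ?_
    exact div_le_div_of_nonneg_left (by norm_num) (by linarith) (by linarith)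

theorem integrableOn_gfun_div_sub {x ε : ℝ} (hx : 1 < x) (hε : 0 < ε) :
    IntegrableOn (fun y => gfun y / (y - x)) {y : ℝ | ε < |y - x|} := by
  have hS : MeasurableSet {y : ℝ | ε < |y - x|} := measurableSet_lt (by fun_prop) (by fun_prop)
  have hmeas : Measurable fun y => gfun y / (y - x) := measurable_gfun.div (by fun_prop)
  have hloc : Integrable ((Set.Ioc (-(2 * x)) (2 * x)).indicator fun y => |gfun y| / ε) := by
    rw [integrable_indicator_iff measurableSet_Ioc]
    exact ((intervalIntegrable_iff_integrableOn_Ioc_of_le (by linarith)).1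
      (intervalIntegrable_gfun _ _)).abs.div_const ε
  refine ((hloc.add (integrable_inv_one_add_sq.const_mul 8)).integrableOn).mono'
    hmeas.aestronglyMeasurable ?_
  refine (ae_restrict_iff' hS).2 (Filter.Eventually.of_forall fun y hy => ?_)
  rw [Set.mem_ofPred_eq] at hy
  rw [Real.norm_eq_abs, abs_div, Pi.add_apply]
  by_cases hmem : y ∈ Set.Ioc (-(2 * x)) (2 * x)
  · rw [Set.indicator_of_mem hmem]
    have := div_le_div_of_nonneg_left (abs_nonneg (gfun y)) hε hy.le
    have : 0 ≤ 8 * (1 + y ^ 2)⁻¹ := by positivity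
    linarith
  · rw [Set.indicator_of_notMem hmem, zero_add]
    have habs : 2 * x ≤ |y| := by
      rw [le_abs]
      by_contra! h
      exact hmem ⟨by linarith, h.1.le⟩
    have hsub : |y| / 2 ≤ |y - x| := by
      have := abs_sub_abs_le_abs_sub y x
      rw [abs_of_pos (by linarith : 0 < x)] at this
      linarith
    calc |gfun y| / |y - x| ≤ (2 / |y|) / (|y| / 2) :=
          div_le_div₀ (by positivity) (abs_gfun_le (by linarith)) (by linarith) hsub
      _ = 4 / y ^ 2 := by
          rw [← sq_abs y]
          have : |y| ≠ 0 := by linarith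
          field_simp
          norm_num
      _ ≤ 8 * (1 + y ^ 2)⁻¹ := by
          have : 1 ≤ y ^ 2 := by rw [← sq_abs]; nlinarith
          rw [← div_eq_mul_inv, div_le_div_iff₀ (by linarith) (by linarith)]
          linarith

theorem gfun_div_sub_nonneg {x y : ℝ} (hx : 1 < x) (hy : x < |y - x|) :
    0 ≤ gfun y / (y - x) := by
  rcases lt_abs.1 hy with h | h
  · exact div_nonneg (gfun_nonneg_of_one_lt (by linarith)) (by linarith)
  · have := gfun_nonneg_of_one_lt (y := 1 - y) (by linarith)
    rw [gfun_one_sub] at this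
    exact div_nonneg_of_nonpos (by linarith) (by linarith)

theorem neg_inv_div_le_gfun_div_sub {x y : ℝ} (hy : y ∈ Set.Ioc (-x) (-1)) :
    -(1 / (4 * x)) * y⁻¹ ≤ gfun y / (y - x) := by
  obtain ⟨hxy, hy⟩ := hy
  have hlog := Real.one_sub_inv_le_log_of_pos (x := (1 - y) / -y)
    (div_pos (by linarith) (by linarith))
  have hg : 1 / (2 * -y) ≤ -gfun y := by
    rw [← gfun_one_sub, gfun, abs_of_pos (by linarith : 0 < 1 - y), sub_sub_cancel_left,
      abs_of_pos (by linarith : 0 < -y)]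
    refine le_trans ?_ hlog
    rw [inv_div, one_sub_div (by linarith), div_le_div_iff₀ (by linarith) (by linarith)]
    linarith
  calc -(1 / (4 * x)) * y⁻¹ = (1 / (2 * -y)) / (2 * x) := by
        have : y ≠ 0 := by linarith
        have : x ≠ 0 := by linarith
        field_simp
        norm_num
    _ ≤ -gfun y / (x - y) :=
        div_le_div₀ ((div_pos one_pos (by linarith)).le.trans hg) hg (by linarith) (by linarith)
    _ = gfun y / (y - x) := by rw [← neg_sub y x, neg_div_neg_eq]

theorem log_div_le_setIntegral_gfun_div_sub {x : ℝ} (hx : 1 < x) :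
    1 / 4 * Real.log x / x ≤ ∫ y in {y : ℝ | x < |y - x|}, gfun y / (y - x) := by
  have hint := integrableOn_gfun_div_sub hx (by linarith : 0 < x)
  have hS : MeasurableSet {y : ℝ | x < |y - x|} := measurableSet_lt (by fun_prop) (by fun_prop)
  have hsub : Set.Ioc (-x) (-1) ⊆ {y : ℝ | x < |y - x|} := fun y hy =>
    show x < |y - x| from lt_abs.2 (Or.inr (by linarith [hy.2]))
  have h0 : (0 : ℝ) ∉ Set.uIcc (-x) (-1) := by
    rw [Set.uIcc_of_le (by linarith)]
    rintro ⟨-, h⟩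
    linarith
  have hinv : IntervalIntegrable (fun y : ℝ => y⁻¹) volume (-x) (-1) :=
    intervalIntegral.intervalIntegrable_inv (fun y hy h => h0 (h ▸ hy)) continuousOn_id
  calc 1 / 4 * Real.log x / x = ∫ y in (-x)..(-1), -(1 / (4 * x)) * y⁻¹ := by
        rw [intervalIntegral.integral_const_mul, integral_inv h0, neg_div_neg_eq, one_div x,
          Real.log_inv]
        have : x ≠ 0 := by linarith
        field_simp
    _ = ∫ y in Set.Ioc (-x) (-1), -(1 / (4 * x)) * y⁻¹ :=
        intervalIntegral.integral_of_le (by linarith)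
    _ ≤ ∫ y in Set.Ioc (-x) (-1), gfun y / (y - x) :=
        setIntegral_mono_on
          ((intervalIntegrable_iff_integrableOn_Ioc_of_le (by linarith)).1 (hinv.const_mul _))
          (hint.mono_set hsub) measurableSet_Ioc fun y hy => neg_inv_div_le_gfun_div_sub hy
    _ ≤ ∫ y in {y : ℝ | x < |y - x|}, gfun y / (y - x) :=
        setIntegral_mono_set hint
          ((ae_restrict_iff' hS).2 (Filter.Eventually.of_forall fun y hy =>
            gfun_div_sub_nonneg hx hy))
          hsub.eventuallyLE

theorem stmt13 :
    ∃ m c : ℝ, Real.exp 1 < m ∧ 0 < c ∧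
      ∀ x : ℝ, m < x →
        (∀ ε : ℝ, 0 < ε →
          IntegrableOn (fun y => gfun y / (y - x)) {y : ℝ | ε < |y - x|}) ∧
        ENNReal.ofReal (c * Real.log x / x)
          ≤ ⨆ (ε : ℝ) (_ : 0 < ε),
              ENNReal.ofReal |∫ y in {y : ℝ | ε < |y - x|}, gfun y / (y - x)| := by
  refine ⟨3, 1 / 4, Real.exp_one_lt_three, by norm_num, fun x hx =>
    ⟨fun ε hε => integrableOn_gfun_div_sub (by linarith) hε, ?_⟩⟩
  refine le_iSup₂_of_le x (by linarith) (ENNReal.ofReal_le_ofReal ?_)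
  exact (log_div_le_setIntegral_gfun_div_sub (by linarith)).trans (le_abs_self _)
end

section
/- There exist constants m > 1 and c > 0 such that for every x > m, ∫_{(m, ∞)} log(1 + 1/y) / (x + y) dy ≥ c · (log x) / x. -/
open MeasureTheory

/-- An antiderivative, vanishing at infinity, of the kernel `1 / ((y + 1) * (x + y))`. -/
theorem hasDerivAt_log_div_sub_one {x y : ℝ} (hx : 1 < x) (hy : 0 ≤ y) :
    HasDerivAt (fun y : ℝ => Real.log ((y + 1) / (x + y)) / (x - 1))
      (1 / ((y + 1) * (x + y))) y := by
  have h₁ : y + 1 ≠ 0 := by positivity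
  have h₂ : x + y ≠ 0 := by positivity
  have h₃ : x - 1 ≠ 0 := by linarith
  have h := ((((hasDerivAt_id' y).add_const 1).div ((hasDerivAt_id' y).const_add x) h₂).log
    (div_ne_zero h₁ h₂)).div_const (x - 1)
  refine h.congr_deriv ?_
  simp only [Pi.div_apply]
  field_simp
  ring

theorem tendsto_log_div_sub_one_atTop (x : ℝ) :
    Filter.Tendsto (fun y : ℝ => Real.log ((y + 1) / (x + y)) / (x - 1))
      Filter.atTop (nhds 0) := by
  have hinv : Filter.Tendsto (fun y : ℝ => (1 - x) / (x + y)) Filter.atTop (nhds 0) :=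
    (Filter.tendsto_atTop_add_const_left _ x Filter.tendsto_id).const_div_atTop _
  have hquot : Filter.Tendsto (fun y : ℝ => (y + 1) / (x + y)) Filter.atTop (nhds 1) := by
    have h := hinv.const_add 1
    rw [add_zero] at h
    refine h.congr' ?_
    filter_upwards [Filter.eventually_gt_atTop (-x)] with y hy
    have : x + y ≠ 0 := by linarith
    field_simp
    ring
  simpa using (hquot.log one_ne_zero).div_const (x - 1)

theorem integrableOn_Ioi_one_div_add_one_mul_add {m x : ℝ} (hm : 0 ≤ m) (hx : 1 < x) :
    IntegrableOn (fun y : ℝ => 1 / ((y + 1) * (x + y))) (Set.Ioi m) :=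
  integrableOn_Ioi_deriv_of_nonneg'
    (fun _ hy => hasDerivAt_log_div_sub_one hx (hm.trans hy))
    (fun y hy => by
      have : 0 < y := hm.trans_lt hy
      positivity)
    (tendsto_log_div_sub_one_atTop x)

theorem integral_Ioi_one_div_add_one_mul_add {m x : ℝ} (hm : 0 ≤ m) (hx : 1 < x) :
    ∫ y in Set.Ioi m, 1 / ((y + 1) * (x + y)) = Real.log ((x + m) / (m + 1)) / (x - 1) := by
  rw [integral_Ioi_of_hasDerivAt_of_tendsto'
    (fun _ hy => hasDerivAt_log_div_sub_one hx (hm.trans hy))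
    (integrableOn_Ioi_one_div_add_one_mul_add hm hx) (tendsto_log_div_sub_one_atTop x),
    ← inv_div (m + 1), Real.log_inv]
  ring

theorem one_div_add_one_le_log_one_add_one_div {y : ℝ} (hy : 0 < y) :
    1 / (y + 1) ≤ Real.log (1 + 1 / y) := by
  have h := Real.one_sub_inv_le_log_of_pos (show 0 < 1 + 1 / y by positivity)
  refine le_trans (le_of_eq ?_) h
  field_simp
  ring

theorem integrableOn_Ioi_log_one_add_one_div_div {m x : ℝ} (hm : 1 ≤ m) (hx : 1 < x) :
    IntegrableOn (fun y : ℝ => Real.log (1 + 1 / y) / (x + y)) (Set.Ioi m) := by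
  refine ((integrableOn_Ioi_one_div_add_one_mul_add (zero_le_one.trans hm) hx).const_mul 2).mono'
    (Measurable.aestronglyMeasurable (by fun_prop)) ?_
  refine (ae_restrict_iff' measurableSet_Ioi).2 (.of_forall fun y hy => ?_)
  have hy₁ : 1 < y := hm.trans_lt hy
  have hy₀ : 0 < y := zero_lt_one.trans hy₁
  have hxy : 0 < x + y := by linarith
  have hlog₀ : 0 ≤ Real.log (1 + 1 / y) :=
    Real.log_nonneg (le_add_of_nonneg_right (by positivity))
  have hlog : Real.log (1 + 1 / y) ≤ 2 / (y + 1) := by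
    have h := Real.log_le_sub_one_of_pos (show 0 < 1 + 1 / y by positivity)
    have h' : 1 / y ≤ 2 / (y + 1) := by
      rw [div_le_div_iff₀ hy₀ (by linarith)]
      linarith
    linarith
  rw [Real.norm_of_nonneg (div_nonneg hlog₀ hxy.le), ← mul_div_assoc, mul_one, ← div_div]
  gcongr

theorem log_div_three_le_log_add_two_div_three {x : ℝ} (hx : 0 < x) :
    Real.log x / 3 ≤ Real.log ((x + 2) / 3) := by
  have hcube : x ≤ ((x + 2) / 3) ^ 3 := by
    nlinarith [mul_nonneg (sq_nonneg (x - 1)) (show 0 ≤ x + 8 by linarith)]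
  have h := Real.log_le_log hx hcube
  rw [Real.log_pow] at h
  push_cast at h
  linarith

theorem stmt15 :
    ∃ m c : ℝ, 1 < m ∧ 0 < c ∧
      ∀ x : ℝ, m < x →
        c * Real.log x / x ≤ ∫ y in Set.Ioi m, Real.log (1 + 1 / y) / (x + y) := by
  refine ⟨2, 1 / 3, by norm_num, by norm_num, fun x hx => ?_⟩
  have hx₁ : 1 < x := by linarith
  have hlog : 0 ≤ Real.log x := Real.log_nonneg hx₁.le
  calc 1 / 3 * Real.log x / x
      = Real.log x / 3 / x := by ring
    _ ≤ Real.log x / 3 / (x - 1) := by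
        gcongr
        linarith
    _ ≤ Real.log ((x + 2) / (2 + 1)) / (x - 1) := by
        have h := log_div_three_le_log_add_two_div_three (show 0 < x by linarith)
        norm_num only
        exact div_le_div_of_nonneg_right h (by linarith)
    _ = ∫ y in Set.Ioi (2 : ℝ), 1 / ((y + 1) * (x + y)) :=
        (integral_Ioi_one_div_add_one_mul_add zero_le_two hx₁).symm
    _ ≤ ∫ y in Set.Ioi (2 : ℝ), Real.log (1 + 1 / y) / (x + y) := by
        refine setIntegral_mono_on (integrableOn_Ioi_one_div_add_one_mul_add zero_le_two hx₁)
          (integrableOn_Ioi_log_one_add_one_div_div one_le_two hx₁) measurableSet_Ioi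
          fun y hy => ?_
        have hy₀ : 0 < y := zero_lt_two.trans hy
        rw [← div_div]
        exact div_le_div_of_nonneg_right (one_div_add_one_le_log_one_add_one_div hy₀)
          (by linarith)
end

section
/- There exists a constant m > 1 such that for every x > m, 0 ≤ ∫_{(2x+m, ∞)} log( y / (y−1) ) / (y − x) dy ≤ 2 / x. -/
open MeasureTheory

theorem log_div_sub_one_nonneg {y : ℝ} (hy : 1 < y) : 0 ≤ Real.log (y / (y - 1)) :=
  Real.log_nonneg <| by rw [le_div_iff₀ (by linarith)]; linarith

theorem log_div_sub_one_le {y : ℝ} (hy : 1 < y) : Real.log (y / (y - 1)) ≤ (y - 1)⁻¹ := by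
  have h : 0 < y - 1 := by linarith
  calc Real.log (y / (y - 1)) ≤ y / (y - 1) - 1 :=
        Real.log_le_sub_one_of_pos (div_pos (by linarith) h)
    _ = (y - 1)⁻¹ := by field_simp; ring

theorem hasDerivAt_neg_inv_sub {x y : ℝ} (h : x < y) :
    HasDerivAt (fun z : ℝ => -(z - x)⁻¹) (((y - x) ^ 2)⁻¹) y := by
  have h0 : y - x ≠ 0 := by linarith
  exact (((hasDerivAt_id' y).sub_const x).fun_inv h0).fun_neg.congr_deriv (by simp [neg_div])

theorem tendsto_neg_inv_sub_atTop (x : ℝ) :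
    Filter.Tendsto (fun z : ℝ => -(z - x)⁻¹) Filter.atTop (nhds 0) := by
  simpa [sub_eq_add_neg] using (tendsto_inv_atTop_zero.comp
    (Filter.tendsto_atTop_add_const_right Filter.atTop (-x) Filter.tendsto_id)).neg

theorem integrableOn_Ioi_inv_sub_sq {x a : ℝ} (h : x < a) :
    IntegrableOn (fun y : ℝ => ((y - x) ^ 2)⁻¹) (Set.Ioi a) :=
  integrableOn_Ioi_deriv_of_nonneg'
    (fun _ hy => hasDerivAt_neg_inv_sub (h.trans_le hy))
    (fun _ _ => by positivity) (tendsto_neg_inv_sub_atTop x)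

theorem integral_Ioi_inv_sub_sq {x a : ℝ} (h : x < a) :
    ∫ y in Set.Ioi a, ((y - x) ^ 2)⁻¹ = (a - x)⁻¹ := by
  rw [integral_Ioi_of_hasDerivAt_of_tendsto'
    (fun _ hy => hasDerivAt_neg_inv_sub (h.trans_le hy))
    (integrableOn_Ioi_inv_sub_sq h) (tendsto_neg_inv_sub_atTop x)]
  ring

theorem stmt16 :
    ∃ m : ℝ, 1 < m ∧
      ∀ x : ℝ, m < x →
        0 ≤ (∫ y in Set.Ioi (2 * x + m), Real.log (y / (y - 1)) / (y - x)) ∧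
        (∫ y in Set.Ioi (2 * x + m), Real.log (y / (y - 1)) / (y - x)) ≤ 2 / x := by
  refine ⟨2, by norm_num, fun x hx => ?_⟩
  have h_nonneg : ∀ y ∈ Set.Ioi (2 * x + 2), 0 ≤ Real.log (y / (y - 1)) / (y - x) := by
    intro y hy
    rw [Set.mem_Ioi] at hy
    exact div_nonneg (log_div_sub_one_nonneg (by linarith)) (by linarith)
  have h_le : ∀ y ∈ Set.Ioi (2 * x + 2),
      Real.log (y / (y - 1)) / (y - x) ≤ ((y - x) ^ 2)⁻¹ := by
    intro y hy
    rw [Set.mem_Ioi] at hy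
    have hyx : 0 < y - x := by linarith
    calc Real.log (y / (y - 1)) / (y - x) ≤ (y - x)⁻¹ / (y - x) := by
          gcongr
          exact (log_div_sub_one_le (by linarith)).trans
            (inv_anti₀ hyx (by linarith))
      _ = ((y - x) ^ 2)⁻¹ := by field_simp
  refine ⟨setIntegral_nonneg measurableSet_Ioi h_nonneg, ?_⟩
  calc ∫ y in Set.Ioi (2 * x + 2), Real.log (y / (y - 1)) / (y - x)
      ≤ ∫ y in Set.Ioi (2 * x + 2), ((y - x) ^ 2)⁻¹ :=
        integral_mono_of_nonneg
          ((ae_restrict_iff' measurableSet_Ioi).2 (.of_forall h_nonneg))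
          (integrableOn_Ioi_inv_sub_sq (by linarith))
          ((ae_restrict_iff' measurableSet_Ioi).2 (.of_forall h_le))
    _ = (2 * x + 2 - x)⁻¹ := integral_Ioi_inv_sub_sq (by linarith)
    _ ≤ 2 / x := by
        rw [inv_eq_one_div]
        exact div_le_div₀ (by norm_num) (by norm_num) (by linarith) (by linarith)
end

section
/- Let n ≥ 1 and 0 < δ < 1. There is a constant C, depending only on n and δ, such that for every measurable function f : ℝ^n → ℝ and every x ∈ ℝ^n,M( (M(|f|^δ))^{1/δ} )(x) ≤ C · M(f)(x), where both sides are allowed to take the value +∞. -/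
open MeasureTheory ENNReal

/-- The uncentered Hardy–Littlewood maximal operator over Euclidean balls, acting on
`[0,∞]`-valued functions: `M g (x) = sup { (1/|B|) ∫_B g : B an open ball containing x }`. -/
noncomputable def maxOp (n : ℕ) (g : EuclideanSpace ℝ (Fin n) → ℝ≥0∞)
    (x : EuclideanSpace ℝ (Fin n)) : ℝ≥0∞ :=
  ⨆ (c : EuclideanSpace ℝ (Fin n)) (r : ℝ) (_ : 0 < r) (_ : x ∈ Metric.ball c r),
    (volume (Metric.ball c r))⁻¹ * ∫⁻ y in Metric.ball c r, g y

theorem lintegral_Ioo_rpow {q : ℝ} (hq : 0 < q) {b : ℝ} (hb : 0 ≤ b) :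
    ∫⁻ t in Set.Ioo 0 b, ENNReal.ofReal (q * t ^ (q - 1)) = ENNReal.ofReal b ^ q := by
  have hint : IntervalIntegrable (fun t : ℝ => q * t ^ (q - 1)) volume 0 b :=
    (intervalIntegral.intervalIntegrable_rpow' (by linarith)).const_mul q
  rw [← ofReal_integral_eq_lintegral_ofReal, ← integral_Ioc_eq_integral_Ioo,
    ← intervalIntegral.integral_of_le hb, intervalIntegral.integral_const_mul,
    integral_rpow (Or.inl (by linarith)), ENNReal.ofReal_rpow_of_nonneg hb hq.le]
  · congr 1
    rw [sub_add_cancel, Real.zero_rpow hq.ne', sub_zero]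
    field_simp
  · exact ((intervalIntegrable_iff_integrableOn_Ioc_of_le hb).1 hint).mono_set
      Set.Ioo_subset_Ioc_self
  · filter_upwards [ae_restrict_mem measurableSet_Ioo] with t ht
    exact mul_nonneg hq.le (Real.rpow_nonneg ht.1.le _)

theorem lintegral_Ioi_indicator_rpow {q : ℝ} (hq : 0 < q) (a : ℝ≥0∞) :
    ∫⁻ t in Set.Ioi (0 : ℝ),
      {s : ℝ | ENNReal.ofReal s < a}.indicator (fun s => ENNReal.ofReal (q * s ^ (q - 1))) t
      = a ^ q := by
  rw [setLIntegral_indicator (measurableSet_lt ENNReal.measurable_ofReal measurable_const)]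
  induction a with
  | top =>
    rw [ENNReal.top_rpow_of_pos hq]
    refine ENNReal.eq_top_of_forall_nnreal_le fun b => ?_
    calc (b : ℝ≥0∞) = ENNReal.ofReal ((b : ℝ) ^ q⁻¹) ^ q := by
          rw [ENNReal.ofReal_rpow_of_nonneg (by positivity) hq.le, ← Real.rpow_mul b.coe_nonneg,
            inv_mul_cancel₀ hq.ne', Real.rpow_one, ENNReal.ofReal_coe_nnreal]
      _ = ∫⁻ t in Set.Ioo 0 ((b : ℝ) ^ q⁻¹), ENNReal.ofReal (q * t ^ (q - 1)) :=
          (lintegral_Ioo_rpow hq (by positivity)).symm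
      _ ≤ _ := lintegral_mono_set (Set.subset_inter
          (fun _ _ => ENNReal.ofReal_lt_top) Set.Ioo_subset_Ioi_self)
  | coe a =>
    have hset : {s : ℝ | ENNReal.ofReal s < a} ∩ Set.Ioi 0 = Set.Ioo 0 (a : ℝ) := by
      ext s
      simp only [Set.mem_inter_iff, Set.mem_ofPred_eq, Set.mem_Ioi, Set.mem_Ioo]
      rw [and_comm]
      refine and_congr_right fun hs => ?_
      rw [← ENNReal.ofReal_coe_nnreal, ENNReal.ofReal_lt_ofReal_iff_of_nonneg hs.le]
    rw [hset, lintegral_Ioo_rpow hq a.coe_nonneg, ENNReal.ofReal_coe_nnreal]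

/-- Layer cake formula for powers of `[0, ∞]`-valued functions. -/
theorem lintegral_rpow_eq_lintegral_Ioi_measure {α : Type*} [MeasurableSpace α] (μ : Measure α)
    [SFinite μ] {u : α → ℝ≥0∞} (hu : Measurable u) {q : ℝ} (hq : 0 < q) :
    ∫⁻ x, u x ^ q ∂μ
      = ∫⁻ t in Set.Ioi (0 : ℝ),
          ENNReal.ofReal (q * t ^ (q - 1)) * μ {x | ENNReal.ofReal t < u x} := by
  simp_rw [← lintegral_Ioi_indicator_rpow hq]
  rw [lintegral_lintegral_swap]
  · refine lintegral_congr fun t => ?_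
    have hm : MeasurableSet {x | ENNReal.ofReal t < u x} := measurableSet_lt measurable_const hu
    rw [← lintegral_indicator_const hm]
    rfl
  · refine Measurable.aemeasurable ?_
    have : Measurable (fun z : α × ℝ => ENNReal.ofReal (q * z.2 ^ (q - 1))) := by fun_prop
    exact this.indicator
      (s := {z : α × ℝ | ENNReal.ofReal z.2 < u z.1})
      (measurableSet_lt (by fun_prop) (by fun_prop))

theorem lintegral_Ioi_mul_setLIntegral {α : Type*} [MeasurableSpace α] (μ : Measure α)
    [SFinite μ] {h u : α → ℝ≥0∞} (hh : Measurable h) (hu : Measurable u) {q : ℝ} (hq : 0 < q) :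
    ∫⁻ t in Set.Ioi (0 : ℝ),
        ENNReal.ofReal (q * t ^ (q - 1)) * ∫⁻ x in {x | ENNReal.ofReal t < u x}, h x ∂μ
      = ∫⁻ x, h x * u x ^ q ∂μ := by
  have := lintegral_rpow_eq_lintegral_Ioi_measure (μ.withDensity h) hu hq
  rw [lintegral_withDensity_eq_lintegral_mul μ hh (hu.pow_const q)] at this
  simp only [Pi.mul_apply] at this
  rw [this]
  refine lintegral_congr fun t => ?_
  rw [withDensity_apply _ (measurableSet_lt measurable_const hu)]

theorem volume_ball_mul (n : ℕ) (c : EuclideanSpace ℝ (Fin n)) {k : ℝ} (hk : 0 < k) (r : ℝ) :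
    volume (Metric.ball c (k * r)) = ENNReal.ofReal (k ^ n) * volume (Metric.ball c r) := by
  rw [Measure.addHaar_ball_mul_of_pos volume c hk, finrank_euclideanSpace_fin,
    Measure.addHaar_ball_center volume c]

theorem average_le_maxOp {n : ℕ} (g : EuclideanSpace ℝ (Fin n) → ℝ≥0∞)
    {x c : EuclideanSpace ℝ (Fin n)} {r : ℝ} (hx : x ∈ Metric.ball c r) :
    (volume (Metric.ball c r))⁻¹ * ∫⁻ y in Metric.ball c r, g y ≤ maxOp n g x :=
  le_iSup₂_of_le c r (le_iSup₂_of_le (Metric.pos_of_mem_ball hx) hx le_rfl)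

theorem volume_ball_ne_zero {n : ℕ} (c : EuclideanSpace ℝ (Fin n)) {r : ℝ} (hr : 0 < r) :
    volume (Metric.ball c r) ≠ 0 := (Metric.measure_ball_pos volume c hr).ne'

theorem setLIntegral_ball_le_mul_maxOp {n : ℕ} (g : EuclideanSpace ℝ (Fin n) → ℝ≥0∞)
    {x c : EuclideanSpace ℝ (Fin n)} {r : ℝ} (hx : x ∈ Metric.ball c r) :
    ∫⁻ y in Metric.ball c r, g y ≤ volume (Metric.ball c r) * maxOp n g x := by
  have h := average_le_maxOp g hx
  rwa [← ENNReal.div_eq_inv_mul, ENNReal.div_le_iff_le_mul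
    (Or.inl (volume_ball_ne_zero c (Metric.pos_of_mem_ball hx))) (Or.inl measure_ball_lt_top.ne),
    mul_comm] at h

theorem lt_maxOp_iff {n : ℕ} {g : EuclideanSpace ℝ (Fin n) → ℝ≥0∞}
    {x : EuclideanSpace ℝ (Fin n)} {t : ℝ≥0∞} :
    t < maxOp n g x ↔ ∃ c r, x ∈ Metric.ball c r ∧
      t * volume (Metric.ball c r) < ∫⁻ y in Metric.ball c r, g y := by
  simp only [maxOp, lt_iSup_iff]
  refine exists_congr fun c => exists_congr fun r => ?_
  have key : 0 < r → (t < (volume (Metric.ball c r))⁻¹ * ∫⁻ y in Metric.ball c r, g y ↔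
      t * volume (Metric.ball c r) < ∫⁻ y in Metric.ball c r, g y) := fun hr => by
    rw [← ENNReal.div_eq_inv_mul, ENNReal.lt_div_iff_mul_lt
      (Or.inl (volume_ball_ne_zero c hr)) (Or.inl measure_ball_lt_top.ne)]
  constructor
  · rintro ⟨hr, hx, h⟩
    exact ⟨hx, (key hr).1 h⟩
  · rintro ⟨hx, h⟩
    have hr := Metric.pos_of_mem_ball hx
    exact ⟨hr, hx, (key hr).2 h⟩

theorem measurable_maxOp {n : ℕ} (g : EuclideanSpace ℝ (Fin n) → ℝ≥0∞) :
    Measurable (maxOp n g) := by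
  refine measurable_of_Ioi fun t => IsOpen.measurableSet ?_
  rw [Metric.isOpen_iff]
  intro x hx
  obtain ⟨c, r, hxc, h⟩ := lt_maxOp_iff.1 hx
  obtain ⟨ε, hε, hsub⟩ := Metric.isOpen_iff.1 Metric.isOpen_ball x hxc
  exact ⟨ε, hε, fun y hy => lt_maxOp_iff.2 ⟨c, r, hsub hy, h⟩⟩

/-- The weak type (1,1) inequality. -/
theorem mul_volume_lt_maxOp_le {n : ℕ} (hn : 1 ≤ n) (g : EuclideanSpace ℝ (Fin n) → ℝ≥0∞)
    (t : ℝ≥0∞) :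
    t * volume {x | t < maxOp n g x} ≤ ENNReal.ofReal (5 ^ n) * ∫⁻ y, g y := by
  rcases eq_or_ne t 0 with rfl | ht0
  · simp
  rcases eq_or_ne (∫⁻ y, g y) ∞ with hI | hI
  · rw [hI, ENNReal.mul_top (by simp)]
    exact le_top
  let T : Set (EuclideanSpace ℝ (Fin n) × ℝ) := {p | 0 < p.2 ∧
    t * volume (Metric.ball p.1 p.2) < ∫⁻ y in Metric.ball p.1 p.2, g y}
  set v := volume (Metric.ball (0 : EuclideanSpace ℝ (Fin n)) 1)
  have hv0 : v ≠ 0 := volume_ball_ne_zero 0 one_pos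
  have hK : (∫⁻ y, g y) / (t * v) ≠ ∞ := ENNReal.div_ne_top hI (mul_ne_zero ht0 hv0)
  have hR : ∀ p ∈ T, p.2 ≤ max 1 ((∫⁻ y, g y) / (t * v)).toReal := by
    rintro ⟨c, r⟩ ⟨hr, h⟩
    rcases le_total r 1 with h1 | h1
    · exact le_max_of_le_left h1
    refine le_max_of_le_right ?_
    dsimp only at hr h
    have hvol : volume (Metric.ball c r) = ENNReal.ofReal (r ^ n) * v := by
      rw [← mul_one r, volume_ball_mul n c hr, Measure.addHaar_ball_center volume c, mul_one]
    rw [← ENNReal.ofReal_le_iff_le_toReal hK]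
    have htv : t * v ≠ ∞ := by
      refine ENNReal.mul_ne_top (fun ht => ?_) measure_ball_lt_top.ne
      rw [ht, ENNReal.top_mul (volume_ball_ne_zero c hr)] at h
      exact not_top_lt h
    rw [ENNReal.le_div_iff_mul_le (Or.inl (mul_ne_zero ht0 hv0)) (Or.inl htv)]
    calc ENNReal.ofReal r * (t * v) ≤ ENNReal.ofReal (r ^ n) * (t * v) := by
          gcongr
          exact le_self_pow₀ h1 (by omega)
      _ = t * volume (Metric.ball c r) := by rw [hvol]; ring
      _ ≤ ∫⁻ y in Metric.ball c r, g y := h.le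
      _ ≤ ∫⁻ y, g y := setLIntegral_le_lintegral _ _
  obtain ⟨u, huT, hdisj, hcov⟩ := Vitali.exists_disjoint_subfamily_covering_enlargement_ball T
    Prod.fst Prod.snd _ hR 5 (by norm_num)
  have hcount : u.Countable := hdisj.countable_of_isOpen (fun _ _ => Metric.isOpen_ball)
    fun p hp => Metric.nonempty_ball.2 (huT hp).1
  have hsub : {x | t < maxOp n g x} ⊆ ⋃ p ∈ u, Metric.ball p.1 (5 * p.2) := by
    intro x hx
    obtain ⟨c, r, hxc, h⟩ := lt_maxOp_iff.1 hx
    obtain ⟨b, hb, hbs⟩ := hcov (c, r) ⟨Metric.pos_of_mem_ball hxc, h⟩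
    exact Set.mem_biUnion hb (hbs hxc)
  calc t * volume {x | t < maxOp n g x}
      ≤ t * ∑' p : u, volume (Metric.ball p.1.1 (5 * p.1.2)) := by
        gcongr
        exact (measure_mono hsub).trans (measure_biUnion_le _ hcount _)
    _ = ENNReal.ofReal (5 ^ n) * ∑' p : u, t * volume (Metric.ball p.1.1 p.1.2) := by
        simp_rw [volume_ball_mul n _ (show (0 : ℝ) < 5 by norm_num), ENNReal.tsum_mul_left]
        ring
    _ ≤ ENNReal.ofReal (5 ^ n) * ∑' p : u, ∫⁻ y in Metric.ball p.1.1 p.1.2, g y := by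
        gcongr with p
        exact (huT p.2).2.le
    _ = ENNReal.ofReal (5 ^ n) * ∫⁻ y in ⋃ p ∈ u, Metric.ball p.1 p.2, g y := by
        rw [lintegral_biUnion hcount (fun _ _ => Metric.isOpen_ball.measurableSet) hdisj]
    _ ≤ ENNReal.ofReal (5 ^ n) * ∫⁻ y, g y := by
        gcongr
        exact Measure.restrict_le_self

theorem mul_volume_lt_maxOp_le_setLIntegral {n : ℕ} (hn : 1 ≤ n)
    {h : EuclideanSpace ℝ (Fin n) → ℝ≥0∞} (hh : Measurable h) {t : ℝ≥0∞} (ht : t ≠ ∞) :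
    t * volume {x | t < maxOp n h x}
      ≤ ENNReal.ofReal (2 * 5 ^ n) * ∫⁻ y in {y | t < 2 * h y}, h y := by
  have hS : MeasurableSet {y | t < 2 * h y} := measurableSet_lt measurable_const (by fun_prop)
  set k := {y | t < 2 * h y}.indicator h with hk
  have hhk : ∀ y, h y ≤ k y + t / 2 := by
    intro y
    by_cases hy : t < 2 * h y
    · rw [hk, Set.indicator_of_mem (show y ∈ {y | t < 2 * h y} from hy)]
      exact le_self_add
    · refine le_add_of_le_right ?_
      rw [ENNReal.le_div_iff_mul_le (by simp) (by simp), mul_comm]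
      exact not_lt.1 hy
  have hsub : {x | t < maxOp n h x} ⊆ {x | t / 2 < maxOp n k x} := by
    intro x hx
    obtain ⟨c, r, hxc, hlt⟩ := lt_maxOp_iff.1 hx
    refine lt_maxOp_iff.2 ⟨c, r, hxc, ?_⟩
    have hfin : t / 2 * volume (Metric.ball c r) ≠ ∞ :=
      ENNReal.mul_ne_top (ENNReal.div_ne_top ht (by simp)) measure_ball_lt_top.ne
    refine (ENNReal.add_lt_add_iff_right hfin).1 ?_
    calc t / 2 * volume (Metric.ball c r) + t / 2 * volume (Metric.ball c r)
        = t * volume (Metric.ball c r) := by rw [← add_mul, ENNReal.add_halves]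
      _ < ∫⁻ y in Metric.ball c r, h y := hlt
      _ ≤ ∫⁻ y in Metric.ball c r, (k y + t / 2) := lintegral_mono hhk
      _ = (∫⁻ y in Metric.ball c r, k y) + t / 2 * volume (Metric.ball c r) := by
          rw [lintegral_add_right _ measurable_const, setLIntegral_const]
  calc t * volume {x | t < maxOp n h x}
      = 2 * (t / 2 * volume {x | t < maxOp n h x}) := by
        rw [← mul_assoc, ENNReal.mul_div_cancel (by simp) (by simp)]
    _ ≤ 2 * (t / 2 * volume {x | t / 2 < maxOp n k x}) := by gcongr
    _ ≤ 2 * (ENNReal.ofReal (5 ^ n) * ∫⁻ y, k y) := by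
        gcongr 2 * ?_
        exact mul_volume_lt_maxOp_le hn k _
    _ = _ := by
        rw [lintegral_indicator hS, ENNReal.ofReal_mul (by norm_num), ENNReal.ofReal_ofNat,
          mul_assoc]

/-- The strong type (p,p) inequality for `1 < p < ∞`. -/
theorem exists_lintegral_maxOp_rpow_le {n : ℕ} (hn : 1 ≤ n) {p : ℝ} (hp : 1 < p) :
    ∃ K : ℝ≥0∞, K ≠ ∞ ∧ ∀ h : EuclideanSpace ℝ (Fin n) → ℝ≥0∞, Measurable h →
      ∫⁻ x, maxOp n h x ^ p ≤ K * ∫⁻ x, h x ^ p := by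
  have hp1 : 0 < p - 1 := by linarith
  obtain ⟨A, hA⟩ : ∃ A, A = ENNReal.ofReal (p / (p - 1)) * ENNReal.ofReal (2 * 5 ^ n) := ⟨_, rfl⟩
  have hAtop : A ≠ ∞ := hA ▸ ENNReal.mul_ne_top ENNReal.ofReal_ne_top ENNReal.ofReal_ne_top
  refine ⟨A * 2 ^ (p - 1), ENNReal.mul_ne_top hAtop
    (ENNReal.rpow_ne_top_of_nonneg hp1.le (by simp)), fun h hh => ?_⟩
  calc ∫⁻ x, maxOp n h x ^ p
      = ∫⁻ t in Set.Ioi (0 : ℝ), ENNReal.ofReal (p * t ^ (p - 1)) *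
          volume {x | ENNReal.ofReal t < maxOp n h x} :=
        lintegral_rpow_eq_lintegral_Ioi_measure volume (measurable_maxOp h) (by linarith)
    _ ≤ ∫⁻ t in Set.Ioi (0 : ℝ), A * (ENNReal.ofReal ((p - 1) * t ^ (p - 1 - 1)) *
          ∫⁻ x in {x | ENNReal.ofReal t < 2 * h x}, h x) := by
        refine setLIntegral_mono' measurableSet_Ioi fun t ht => ?_
        have ht' : 0 < t := ht
        have hsplit : p * t ^ (p - 1) = p / (p - 1) * ((p - 1) * t ^ (p - 1 - 1)) * t := by
          rw [Real.rpow_sub_one ht'.ne' (p - 1)]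
          field_simp
        rw [hsplit, ENNReal.ofReal_mul (by positivity), ENNReal.ofReal_mul (by positivity),
          mul_assoc]
        calc _ ≤ ENNReal.ofReal (p / (p - 1)) * ENNReal.ofReal ((p - 1) * t ^ (p - 1 - 1)) *
              (ENNReal.ofReal (2 * 5 ^ n) *
                ∫⁻ x in {x | ENNReal.ofReal t < 2 * h x}, h x) := by
              gcongr _ * ?_
              exact mul_volume_lt_maxOp_le_setLIntegral hn hh ENNReal.ofReal_ne_top
          _ = _ := by rw [hA]; ring
    _ = A * ∫⁻ x, h x * (2 * h x) ^ (p - 1) := by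
        rw [lintegral_const_mul' _ _ hAtop,
          lintegral_Ioi_mul_setLIntegral volume hh (hh.const_mul 2) hp1]
    _ = A * 2 ^ (p - 1) * ∫⁻ x, h x ^ p := by
        rw [mul_assoc, ← lintegral_const_mul _ (hh.pow_const p)]
        congr 1
        refine lintegral_congr fun x => ?_
        rw [ENNReal.mul_rpow_of_nonneg _ _ hp1.le, mul_left_comm]
        congr 1
        nth_rw 1 [← ENNReal.rpow_one (h x)]
        rw [← ENNReal.rpow_add_of_nonneg _ _ zero_le_one hp1.le, add_sub_cancel]

theorem average_le_maxOp_rpow {n : ℕ} {p : ℝ} (hp : 1 < p)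
    {g : EuclideanSpace ℝ (Fin n) → ℝ≥0∞} (hg : Measurable g)
    {x c : EuclideanSpace ℝ (Fin n)} {r : ℝ} (hx : x ∈ Metric.ball c r) :
    (volume (Metric.ball c r))⁻¹ * ∫⁻ y in Metric.ball c r, g y
      ≤ maxOp n (fun y => g y ^ p) x ^ (1 / p) := by
  set μ := (volume (Metric.ball c r))⁻¹ • volume.restrict (Metric.ball c r) with hμ
  have hμ1 : μ Set.univ = 1 := by
    simp [hμ, ENNReal.inv_mul_cancel (volume_ball_ne_zero c (Metric.pos_of_mem_ball hx))
      measure_ball_lt_top.ne]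
  have := ENNReal.lintegral_mul_le_Lp_mul_Lq μ (Real.HolderConjugate.conjExponent hp)
    hg.aemeasurable (aemeasurable_const (b := (1 : ℝ≥0∞)))
  simp only [Pi.mul_apply, mul_one, ENNReal.one_rpow, lintegral_const, hμ1] at this
  rw [hμ, lintegral_smul_measure, lintegral_smul_measure, smul_eq_mul, smul_eq_mul] at this
  refine this.trans ?_
  gcongr
  exact average_le_maxOp (fun y => g y ^ p) hx

/-- Splitting the balls through `y` into those of radius at most `r` and those of larger radius. -/
theorem maxOp_le_max {n : ℕ} {p : ℝ} (hp : 1 < p)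
    {g : EuclideanSpace ℝ (Fin n) → ℝ≥0∞} (hg : Measurable g)
    {x y c : EuclideanSpace ℝ (Fin n)} {r : ℝ} (hx : x ∈ Metric.ball c r)
    (hy : y ∈ Metric.ball c r) :
    maxOp n g y ≤ max (maxOp n ((Metric.ball c (3 * r)).indicator g) y)
      (ENNReal.ofReal (3 ^ n) * maxOp n (fun z => g z ^ p) x ^ (1 / p)) := by
  refine iSup₂_le fun c' r' => iSup₂_le fun hr' hy' => ?_
  rw [Metric.mem_ball] at hx hy
  have hy'' := Metric.mem_ball.1 hy'
  rcases le_total r' r with hle | hle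
  · refine le_max_of_le_left ((average_le_maxOp _ hy').trans' ?_)
    gcongr 1
    refine setLIntegral_mono' Metric.isOpen_ball.measurableSet fun z hz => ?_
    rw [Set.indicator_of_mem]
    rw [Metric.mem_ball] at hz ⊢
    linarith [dist_triangle z c' c, dist_triangle c' y c, dist_comm c' y]
  · refine le_max_of_le_right ?_
    have hx3 : x ∈ Metric.ball c' (3 * r') := by
      rw [Metric.mem_ball]
      linarith [dist_triangle x c c', dist_triangle c y c', dist_comm c y]
    calc (volume (Metric.ball c' r'))⁻¹ * ∫⁻ z in Metric.ball c' r', g z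
        ≤ (volume (Metric.ball c' r'))⁻¹ * ∫⁻ z in Metric.ball c' (3 * r'), g z := by
          gcongr
          linarith
      _ = ENNReal.ofReal (3 ^ n) * ((volume (Metric.ball c' (3 * r')))⁻¹ *
            ∫⁻ z in Metric.ball c' (3 * r'), g z) := by
          rw [volume_ball_mul n c' (by norm_num), ENNReal.mul_inv (by simp) (by simp), ← mul_assoc,
            ← mul_assoc, ENNReal.mul_inv_cancel (by simp) (by simp), one_mul]
      _ ≤ _ := by
          gcongr
          exact average_le_maxOp_rpow hp hg hx3

theorem exists_maxOp_maxOp_rpow_le {n : ℕ} (hn : 1 ≤ n) {p : ℝ} (hp : 1 < p) :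
    ∃ K : ℝ≥0∞, K ≠ ∞ ∧ ∀ g : EuclideanSpace ℝ (Fin n) → ℝ≥0∞, Measurable g →
      ∀ x, maxOp n (fun y => maxOp n g y ^ p) x ≤ K * maxOp n (fun y => g y ^ p) x := by
  obtain ⟨K, hK, hstrong⟩ := exists_lintegral_maxOp_rpow_le hn hp
  have hp0 : 0 < p := by linarith
  refine ⟨K * ENNReal.ofReal (3 ^ n) + ENNReal.ofReal (3 ^ n) ^ p,
    ENNReal.add_ne_top.2 ⟨ENNReal.mul_ne_top hK ENNReal.ofReal_ne_top,
      ENNReal.rpow_ne_top_of_nonneg hp0.le ENNReal.ofReal_ne_top⟩, fun g hg x => ?_⟩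
  set m := maxOp n (fun y => g y ^ p) x
  refine iSup₂_le fun c r => iSup₂_le fun hr hx => ?_
  have hx3 : x ∈ Metric.ball c (3 * r) := Metric.ball_subset_ball (by linarith) hx
  set h := (Metric.ball c (3 * r)).indicator g with hh
  have hpt : ∀ y ∈ Metric.ball c r,
      maxOp n g y ^ p ≤ maxOp n h y ^ p + ENNReal.ofReal (3 ^ n) ^ p * m := by
    intro y hy
    have hmp : (ENNReal.ofReal (3 ^ n) * m ^ (1 / p)) ^ p = ENNReal.ofReal (3 ^ n) ^ p * m := by
      rw [ENNReal.mul_rpow_of_nonneg _ _ hp0.le, ← ENNReal.rpow_mul, one_div_mul_cancel hp0.ne',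
        ENNReal.rpow_one]
    refine (ENNReal.rpow_le_rpow (maxOp_le_max hp hg hx hy) hp0.le).trans ?_
    rw [(ENNReal.monotone_rpow_of_nonneg hp0.le).map_max, hmp]
    exact max_le_add_of_nonneg zero_le zero_le
  have hloc : ∫⁻ y, h y ^ p = ∫⁻ y in Metric.ball c (3 * r), g y ^ p := by
    rw [← lintegral_indicator Metric.isOpen_ball.measurableSet]
    refine lintegral_congr fun y => ?_
    by_cases hy : y ∈ Metric.ball c (3 * r)
    · simp only [hh, Set.indicator_of_mem hy]
    · simp only [hh, Set.indicator_of_notMem hy, ENNReal.zero_rpow_of_pos hp0]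
  have hv0 := volume_ball_ne_zero c hr
  rw [← ENNReal.div_eq_inv_mul,
    ENNReal.div_le_iff_le_mul (Or.inl hv0) (Or.inl measure_ball_lt_top.ne)]
  calc ∫⁻ y in Metric.ball c r, maxOp n g y ^ p
      ≤ ∫⁻ y in Metric.ball c r, (maxOp n h y ^ p + ENNReal.ofReal (3 ^ n) ^ p * m) :=
        setLIntegral_mono' Metric.isOpen_ball.measurableSet hpt
    _ = (∫⁻ y in Metric.ball c r, maxOp n h y ^ p) +
          ENNReal.ofReal (3 ^ n) ^ p * m * volume (Metric.ball c r) := by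
        rw [lintegral_add_right _ measurable_const, setLIntegral_const]
    _ ≤ K * (ENNReal.ofReal (3 ^ n) * volume (Metric.ball c r) * m) +
          ENNReal.ofReal (3 ^ n) ^ p * m * volume (Metric.ball c r) := by
        gcongr
        refine (setLIntegral_le_lintegral _ _).trans
          ((hstrong h (hg.indicator Metric.isOpen_ball.measurableSet)).trans ?_)
        rw [hloc, ← volume_ball_mul n c (by norm_num)]
        gcongr
        exact setLIntegral_ball_le_mul_maxOp _ hx3
    _ = _ := by ring

theorem stmt18 (n : ℕ) (hn : 1 ≤ n) (δ : ℝ) (hδ0 : 0 < δ) (hδ1 : δ < 1) :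
    ∃ C : ℝ, 0 < C ∧
      ∀ f : EuclideanSpace ℝ (Fin n) → ℝ, Measurable f →
        ∀ x : EuclideanSpace ℝ (Fin n),
          maxOp n
              (fun y => (maxOp n (fun z => ENNReal.ofReal (|f z| ^ δ)) y) ^ (1 / δ)) x
            ≤ ENNReal.ofReal C * maxOp n (fun y => ENNReal.ofReal (|f y|)) x := by
  obtain ⟨K, hK, hbound⟩ := exists_maxOp_maxOp_rpow_le hn ((one_lt_div hδ0).2 hδ1)
  refine ⟨K.toReal + 1, by positivity, fun f hf x => ?_⟩
  have hpow : ∀ y, ENNReal.ofReal (|f y| ^ δ) ^ (1 / δ) = ENNReal.ofReal |f y| := by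
    intro y
    rw [ENNReal.ofReal_rpow_of_nonneg (by positivity) (by positivity),
      ← Real.rpow_mul (abs_nonneg _), mul_one_div_cancel hδ0.ne', Real.rpow_one]
  have h := hbound (fun z => ENNReal.ofReal (|f z| ^ δ))
    ((hf.abs.pow_const δ).ennreal_ofReal) x
  simp only [hpow] at h
  refine h.trans ?_
  gcongr
  rw [ENNReal.le_ofReal_iff_toReal_le hK (by positivity)]
  linarith
end
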